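/- arXiv:1805.01637 — 8 statements merged into one kernel-verified Lean document; each statement's English description precedes it below -/
import Mathlib

section
/- Let β and β' be two nonsquares in F = GF(q^(2l)), and let d be an integer with 1 ≤ d ≤ 2lh − 1, gcd(l, d) = 1, and l + d odd. Then there exist nonzero elements b₀, b₁ ∈ F such that β'·β^(−1)·b₀^(q^d+1) lies in the subfield 𝔽_{q^l} and β^(1−q^(2l−d))·b₁^(q^(2l−d)+1) lies in the subfield 𝔽_{q^l}. -/
/-!
Write `Q = q ^ l`, so `|F| = Q ^ 2`, and the `(Q + 1)`-st power of any element of `F` is its norm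
to the subfield with `Q` elements.  When `l + m` is odd, `gcd (q ^ m + 1) (q ^ l + 1)` divides `2`
(`exists_two_eq_combination`), so `2 = (q ^ m + 1) x + (Q + 1) y` for some integers `x`, `y`, and
for `s ≠ 0` the element `b = s ^ (-x)` satisfies `s ^ 2 * b ^ (q ^ m + 1) = (s ^ (Q + 1)) ^ y`,
which lies in the subfield (`exists_sq_mul_pow_mem_subfield`).  It remains to see that both given
coefficients are squares: `β' * β⁻¹` because it is a quotient of two nonsquares, and
`β ^ (1 - q ^ (2 * l - d))` because its exponent is even.
-/

/-- If `n` is odd and `m` is even, then `q ^ (m * n)` is `-1` modulo `q ^ m + 1` and `1` modulo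
`q ^ n + 1`, so a common divisor of these two numbers divides `2`. -/
lemma gcd_pow_add_one_dvd_two (q m n : ℕ) (hm : Even m) (hn : Odd n) :
    ((Int.gcd ((q : ℤ) ^ m + 1) ((q : ℤ) ^ n + 1) : ℕ) : ℤ) ∣ 2 := by
  have h1 : (q : ℤ) ^ m + 1 ∣ q ^ (m * n) + 1 := by
    have := hn.add_dvd_pow_add_pow ((q : ℤ) ^ m) 1
    rwa [one_pow, ← pow_mul] at this
  have h2 : (q : ℤ) ^ n + 1 ∣ q ^ (m * n) - 1 := by
    have := sub_dvd_pow_sub_pow (-(q : ℤ) ^ n) 1 m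
    rwa [hm.neg_pow, one_pow, ← pow_mul, mul_comm n m, ← neg_dvd, neg_sub, sub_neg_eq_add,
      add_comm] at this
  have := dvd_sub ((Int.gcd_dvd_left ..).trans h1) ((Int.gcd_dvd_right ..).trans h2)
  rwa [show ((q : ℤ) ^ (m * n) + 1) - (q ^ (m * n) - 1) = 2 by ring] at this

lemma exists_two_eq_combination (q m l : ℕ) (h : Odd (l + m)) :
    ∃ x y : ℤ, 2 = ((q : ℤ) ^ m + 1) * x + ((q : ℤ) ^ l + 1) * y := by
  apply Int.gcd_dvd_iff.mp
  rw [← Int.natCast_dvd_natCast]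
  rcases Nat.even_or_odd m with hm | hm
  · exact gcd_pow_add_one_dvd_two q m l hm ((Nat.odd_add.mp h).mpr hm)
  · rw [Int.gcd_comm]
    refine gcd_pow_add_one_dvd_two q l m ?_ hm
    exact (Nat.odd_add'.mp h).mp hm

/-- A nonzero square can be moved into the subfield `{z | z ^ q ^ l = z}` by multiplying it with
a `(q ^ m + 1)`-st power. -/
lemma exists_sq_mul_pow_mem_subfield (q l m : ℕ) (h : Odd (l + m))
    (F : Type*) [Field F] [Fintype F] (hcard : Fintype.card F = q ^ (2 * l))
    (s : F) (hs : s ≠ 0) :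
    ∃ b : F, b ≠ 0 ∧ (s ^ 2 * b ^ (q ^ m + 1)) ^ q ^ l = s ^ 2 * b ^ (q ^ m + 1) := by
  obtain ⟨x, y, hxy⟩ := exists_two_eq_combination q m l h
  refine ⟨s ^ (-x), zpow_ne_zero _ hs, ?_⟩
  have key : s ^ 2 * (s ^ (-x)) ^ (q ^ m + 1) = (s ^ (q ^ l + 1)) ^ y := by
    rw [← zpow_natCast (s ^ (-x)), ← zpow_natCast s, ← zpow_natCast s, ← zpow_mul, ← zpow_mul,
      ← zpow_add₀ hs]
    congr 1
    push_cast
    linear_combination hxy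
  have norm_fixed : (s ^ (q ^ l + 1)) ^ q ^ l = s ^ (q ^ l + 1) := by
    have hF : s ^ (q ^ l * q ^ l) = s := by
      rw [← pow_add, ← two_mul, ← hcard, FiniteField.pow_card]
    rw [← pow_mul, add_mul, one_mul, pow_add, hF, pow_succ, mul_comm]
  rw [key, ← zpow_natCast, zpow_comm, zpow_natCast, norm_fixed]

lemma isSquare_mul_inv_of_nonsquares (F : Type*) [Field F] [Fintype F] (a b : F)
    (ha : ¬ IsSquare a) (hb : ¬ IsSquare b) : IsSquare (a * b⁻¹) := by
  classical
  have hF : ringChar F ≠ 2 := fun h2 => ha (FiniteField.isSquare_of_char_two h2 a)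
  have ha0 : a ≠ 0 := fun h0 => ha (h0 ▸ IsSquare.zero)
  have hb0 : b ≠ 0 := fun h0 => hb (h0 ▸ IsSquare.zero)
  have hb' : ¬ IsSquare b⁻¹ := by rwa [isSquare_inv]
  rw [← quadraticChar_one_iff_isSquare (mul_ne_zero ha0 (inv_ne_zero hb0)), map_mul,
    (quadraticChar_neg_one_iff_not_isSquare).mpr ha,
    (quadraticChar_neg_one_iff_not_isSquare).mpr hb']
  norm_num

/-- Let β and β' be two nonsquares in F = GF(q^(2l)), and let d be an
integer with 1 ≤ d ≤ 2lh − 1, gcd(l, d) = 1, and l + d odd. Then there exist nonzero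
elements b₀, b₁ ∈ F such that β'·β⁻¹·b₀^(q^d+1) lies in the subfield 𝔽_{q^l} and
β^(1−q^(2l−d))·b₁^(q^(2l−d)+1) lies in the subfield 𝔽_{q^l}.
(An element z of F lies in 𝔽_{q^l} iff z^(q^l) = z.) -/
theorem bh_exists_b0_b1 (p h l d q : ℕ) (hp : p.Prime) (hpodd : Odd p) (hh : 0 < h)
    (hq : q = p ^ h) (hl : 1 < l) (hd1 : 1 ≤ d) (hd2 : d ≤ 2 * l * h - 1)
    (hgcd : Nat.gcd l d = 1) (hparity : Odd (l + d))
    (F : Type*) [Field F] [Fintype F] (hcard : Fintype.card F = q ^ (2 * l))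
    (β β' : F) (hβ : ∀ w : F, β ≠ w ^ 2) (hβ' : ∀ w : F, β' ≠ w ^ 2) :
    ∃ b₀ b₁ : F, b₀ ≠ 0 ∧ b₁ ≠ 0 ∧
      (β' * β⁻¹ * b₀ ^ (q ^ d + 1)) ^ q ^ l = β' * β⁻¹ * b₀ ^ (q ^ d + 1) ∧
      (β ^ (1 - (q : ℤ) ^ (2 * l - d)) * b₁ ^ (q ^ (2 * l - d) + 1)) ^ q ^ l
        = β ^ (1 - (q : ℤ) ^ (2 * l - d)) * b₁ ^ (q ^ (2 * l - d) + 1) := by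
  have hsqβ : ¬ IsSquare β := fun ⟨w, hw⟩ => hβ w (by rw [hw, sq])
  have hsqβ' : ¬ IsSquare β' := fun ⟨w, hw⟩ => hβ' w (by rw [hw, sq])
  have hβ0 : β ≠ 0 := fun h0 => hsqβ (h0 ▸ IsSquare.zero)
  have hβ'0 : β' ≠ 0 := fun h0 => hsqβ' (h0 ▸ IsSquare.zero)
  obtain ⟨s, hs⟩ := isSquare_mul_inv_of_nonsquares F β' β hsqβ' hsqβ
  have hs0 : s ≠ 0 := by
    rintro rfl
    exact mul_ne_zero hβ'0 (inv_ne_zero hβ0) (by simpa using hs)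
  obtain ⟨b₀, hb₀, hb₀'⟩ := exists_sq_mul_pow_mem_subfield q l d hparity F hcard s hs0
  rw [sq, ← hs] at hb₀'
  suffices ∃ b₁ : F, b₁ ≠ 0 ∧
      (β ^ (1 - (q : ℤ) ^ (2 * l - d)) * b₁ ^ (q ^ (2 * l - d) + 1)) ^ q ^ l
        = β ^ (1 - (q : ℤ) ^ (2 * l - d)) * b₁ ^ (q ^ (2 * l - d) + 1) by
    obtain ⟨b₁, hb₁, hb₁'⟩ := this
    exact ⟨b₀, b₁, hb₀, hb₁, hb₀', hb₁'⟩
  rcases le_or_gt d (2 * l) with hdl | hdl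
  · have hpar : Odd (l + (2 * l - d)) := by
      rw [Nat.odd_iff] at hparity ⊢
      omega
    have hqodd : Odd (q : ℤ) := by
      rw [Int.odd_coe_nat, hq]
      exact hpodd.pow
    obtain ⟨k, hk⟩ : Even (1 - (q : ℤ) ^ (2 * l - d)) := odd_one.sub_odd hqodd.pow
    have hβk : β ^ (1 - (q : ℤ) ^ (2 * l - d)) = (β ^ k) ^ 2 := by
      rw [hk, zpow_add₀ hβ0, sq]
    rw [hβk]
    exact exists_sq_mul_pow_mem_subfield q l _ hpar F hcard (β ^ k) (zpow_ne_zero _ hβ0)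
  · -- For `2 * l < d` the truncated difference `2 * l - d` is `0`, the coefficient is `β ^ 0 = 1`.
    refine ⟨1, one_ne_zero, ?_⟩
    simp [Nat.sub_eq_zero_of_le hdl.le]
end

section
/- Let β and β' be two nonsquares in F = GF(q^(2l)). Then the presemifields (F, +, ∗_{(d,β)}) and (F, +, ∗_{(d,β')}) are strongly isotopic; more precisely, there exist a nonzero b₀ ∈ F and an additive (𝔽_p-linear) bijection L₀ of F such that L₀(x ∗_{(d,β)} y) = (b₀·x) ∗_{(d,β')} (b₀·y) for all x, y ∈ F. -/
/-!
Write `σ z = z ^ q ^ l` for the involution of `F` with fixed field `K = GF(q^l)`. As `σ ω = -ω`,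
the two summands of `x ∗_{(d,β)} y`, namely `σ x * y + x * σ y` and `Tr_{F/K}(β * S(x, y)) * ω`
with `S(x, y) = x ^ q ^ d * y + x * y ^ q ^ d`, lie in the `σ`-eigenspaces `K` and `K ω`.
Replacing `x, y` by `b * x, b * y` multiplies the first summand by the norm `b ^ (q ^ l + 1) ∈ K`
and `S` by `b ^ (q ^ d + 1)`. If `β' * b ^ (q ^ d + 1) = c * β` with `c ∈ K`, then the
map acting as `b ^ (q ^ l + 1)` on `K` and as `c` on `K ω` is the required isotopism.

Such `b` and `c` exist because `gcd l d = 1` and `l + d` odd force `gcd (q ^ d + 1) (q ^ l + 1) ∣ 2`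
(`gcd_pow_add_one_dvd_two`): the square `β / β'` is therefore a product of a `(q ^ d + 1)`-th power
and of a `(q ^ l + 1)`-th power, the latter being a norm and hence in `K`.
-/

/-- The Budaghyan–Helleseth multiplication `x ∗_{(e,β)} y` on `F = GF(q^(2l))`,
relative to a fixed `ω` with `ω + ω^(q^l) = 0`. -/
def bhMul {F : Type*} [Field F] (q l e : ℕ) (β ω x y : F) : F :=
  x ^ q ^ l * y + x * y ^ q ^ l +
    (β * (x ^ q ^ e * y + x * y ^ q ^ e) +
      β ^ q ^ l * (x ^ q ^ e * y + x * y ^ q ^ e) ^ q ^ l) * ω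

/-- If `d` and `l` are coprime and one of them is even, modulo a common divisor of `q ^ d + 1` and
`q ^ l + 1` both `q ^ (2 * d)` and `q ^ (2 * l)` are `1`, so `q ^ 2 = 1`, and the power with even
exponent is both `1` and `-1`. -/
lemma gcd_pow_add_one_dvd_two_s2 (q l d : ℕ) (hgcd : Nat.gcd l d = 1) (hparity : Odd (l + d)) :
    Nat.gcd (q ^ d + 1) (q ^ l + 1) ∣ 2 := by
  set g := Nat.gcd (q ^ d + 1) (q ^ l + 1) with hg
  have h1 : (q : ZMod g) ^ d + 1 = 0 := by
    have := (ZMod.natCast_eq_zero_iff (q ^ d + 1) g).2 (Nat.gcd_dvd_left _ _)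
    exact_mod_cast this
  have h2 : (q : ZMod g) ^ l + 1 = 0 := by
    have := (ZMod.natCast_eq_zero_iff (q ^ l + 1) g).2 (Nat.gcd_dvd_right _ _)
    exact_mod_cast this
  have e1 : (q : ZMod g) ^ d = -1 := eq_neg_of_add_eq_zero_left h1
  have e2 : (q : ZMod g) ^ l = -1 := eq_neg_of_add_eq_zero_left h2
  have hq2 : (q : ZMod g) ^ 2 = 1 := by
    have a1 : orderOf (q : ZMod g) ∣ 2 * l := orderOf_dvd_of_pow_eq_one (by
      rw [mul_comm, pow_mul, e2]; ring)
    have a2 : orderOf (q : ZMod g) ∣ 2 * d := orderOf_dvd_of_pow_eq_one (by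
      rw [mul_comm, pow_mul, e1]; ring)
    have a3 := Nat.dvd_gcd a1 a2
    rw [Nat.gcd_mul_left, hgcd, mul_one] at a3
    exact orderOf_dvd_iff_pow_eq_one.1 a3
  have key : ((2 : ℕ) : ZMod g) = 0 := by
    rcases Nat.even_or_odd l with ⟨k, hk⟩ | hl
    · have : (q : ZMod g) ^ l = 1 := by rw [hk, ← two_mul, pow_mul, hq2, one_pow]
      rw [this] at h2
      push_cast
      linear_combination h2
    · obtain ⟨k, hk⟩ : Even d := by
        rcases Nat.even_or_odd d with hd | hd
        · exact hd
        · exact absurd hparity (Nat.not_odd_iff_even.2 (hl.add_odd hd))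
      have : (q : ZMod g) ^ d = 1 := by rw [hk, ← two_mul, pow_mul, hq2, one_pow]
      rw [this] at h1
      push_cast
      linear_combination h1
  exact (ZMod.natCast_eq_zero_iff 2 g).1 key

/-- The isotopism for an abstract involution `σ` (the role of `z ↦ z ^ q ^ l`) and an abstract
endomorphism `τ` (the role of `z ↦ z ^ q ^ d`): a `σ`-fixed multiplier `c` with
`β' * (τ b * b) = c * β` suffices. -/
lemma exists_isotopism {F : Type*} [Field F] [Finite F] (h2 : (2 : F) ≠ 0) (σ τ : F →+* F)
    (hσ : ∀ z, σ (σ z) = z) (ω β β' b c : F) (hω : σ ω = -ω) (hb : b ≠ 0) (hc : c ≠ 0)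
    (hcσ : σ c = c) (h : β' * (τ b * b) = c * β) :
    ∃ L₀ : F → F, Function.Bijective L₀ ∧ (∀ x y : F, L₀ (x + y) = L₀ x + L₀ y) ∧
      ∀ x y : F,
        L₀ (σ x * y + x * σ y +
          (β * (τ x * y + x * τ y) + σ β * σ (τ x * y + x * τ y)) * ω) =
        σ (b * x) * (b * y) + b * x * σ (b * y) +
          (β' * (τ (b * x) * (b * y) + b * x * τ (b * y)) +
            σ β' * σ (τ (b * x) * (b * y) + b * x * τ (b * y))) * ω := by
  have hN : σ b * b ≠ 0 := mul_ne_zero ((map_ne_zero σ).2 hb) hb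
  have h' : σ β' * (σ (τ b) * σ b) = c * σ β := by
    simpa [hcσ] using congrArg σ h
  let L : F →+ F := AddMonoidHom.mk' (fun z => σ b * b * ((z + σ z) / 2) + c * ((z - σ z) / 2)) (by
    intro x y; simp only [map_add]; ring)
  refine ⟨L, Finite.injective_iff_bijective.1 ((injective_iff_map_eq_zero L).2 ?_),
    map_add L, ?_⟩
  · intro z hz
    have hz1 : σ b * b * ((z + σ z) / 2) + c * ((z - σ z) / 2) = 0 := hz
    have hz2 : b * σ b * ((σ z + z) / 2) + c * ((σ z - z) / 2) = 0 := by
      simpa [hσ, hcσ, map_ofNat] using congrArg σ hz1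
    have p1 : z + σ z = 0 := by
      have : σ b * b * (z + σ z) = 0 := by
        linear_combination (norm := (field_simp; ring)) hz1 + hz2
      exact (mul_eq_zero.1 this).resolve_left hN
    have p2 : z - σ z = 0 := by
      have : c * (z - σ z) = 0 := by
        linear_combination (norm := (field_simp; ring)) hz1 - hz2
      exact (mul_eq_zero.1 this).resolve_left hc
    have : 2 * z = 0 := by linear_combination p1 + p2
    exact (mul_eq_zero.1 this).resolve_left h2
  · intro x y
    change σ b * b * ((_ + σ _) / 2) + c * ((_ - σ _) / 2) = _
    simp only [map_add, map_mul, hσ, hω]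
    have hA : c * β * (τ x * y + x * τ y) = β' * (τ b * b) * (τ x * y + x * τ y) := by rw [h]
    have hB : c * σ β * (σ (τ x) * σ y + σ x * σ (τ y)) =
        σ β' * (σ (τ b) * σ b) * (σ (τ x) * σ y + σ x * σ (τ y)) := by rw [h']
    linear_combination (norm := (field_simp; ring)) ω * hA + ω * hB

/-- Let β and β' be two nonsquares in F = GF(q^(2l)). Then the
presemifields (F, +, ∗_{(d,β)}) and (F, +, ∗_{(d,β')}) are strongly isotopic; more
precisely, there exist a nonzero b₀ ∈ F and an additive (𝔽_p-linear) bijection L₀ of F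
such that L₀(x ∗_{(d,β)} y) = (b₀·x) ∗_{(d,β')} (b₀·y) for all x, y ∈ F. -/
theorem bh_beta_strong_isotopy (p h l d q : ℕ) (hp : p.Prime) (hpodd : Odd p)
    (hh : 0 < h) (hq : q = p ^ h) (hl : 1 < l) (hd1 : 1 ≤ d) (hd2 : d ≤ 2 * l * h - 1)
    (hgcd : Nat.gcd l d = 1) (hparity : Odd (l + d))
    (F : Type*) [Field F] [Fintype F] (hcard : Fintype.card F = q ^ (2 * l))
    (ω : F) (hω : ω ≠ 0) (hωtr : ω + ω ^ q ^ l = 0)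
    (β β' : F) (hβ : ∀ w : F, β ≠ w ^ 2) (hβ' : ∀ w : F, β' ≠ w ^ 2) :
    ∃ b₀ : F, b₀ ≠ 0 ∧ ∃ L₀ : F → F, Function.Bijective L₀ ∧
      (∀ x y : F, L₀ (x + y) = L₀ x + L₀ y) ∧
      ∀ x y : F, L₀ (bhMul q l d β ω x y) = bhMul q l d β' ω (b₀ * x) (b₀ * y) := by
  classical
  have : Fact p.Prime := ⟨hp⟩
  have hF : Fintype.card F = p ^ (h * (2 * l)) := by rw [hcard, hq, ← pow_mul]
  have : CharP F p := charP_of_card_eq_prime_pow hF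
  have : ExpChar F p := ExpChar.prime hp
  have hp2 : p ≠ 2 := by rintro rfl; exact absurd hpodd (by decide)
  have hchar : ringChar F ≠ 2 := by rwa [ringChar.eq F p]
  have h2 : (2 : F) ≠ 0 := Ring.two_ne_zero hchar
  have hpow : ∀ n (z : F), iterateFrobenius F p (h * n) z = z ^ q ^ n := fun n z => by
    rw [iterateFrobenius_def, hq, pow_mul]
  have hfix : ∀ z : F, (z ^ q ^ l) ^ q ^ l = z := fun z => by
    rw [← pow_mul, ← pow_add, ← two_mul, ← hcard, FiniteField.pow_card]
  have hβ0 : β ≠ 0 := by rintro rfl; exact hβ 0 (by simp)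
  have hβ0' : β' ≠ 0 := by rintro rfl; exact hβ' 0 (by simp)
  -- The quotient of two nonsquares is a square, as the quadratic character shows.
  obtain ⟨w, hw0, hw⟩ : ∃ w : F, w ≠ 0 ∧ β = β' * w ^ 2 := by
    have c1 : quadraticChar F β = -1 := quadraticChar_neg_one_iff_not_isSquare.2
      fun ⟨r, hr⟩ => hβ r (by rw [hr, sq])
    have c2 : quadraticChar F β' = -1 := quadraticChar_neg_one_iff_not_isSquare.2
      fun ⟨r, hr⟩ => hβ' r (by rw [hr, sq])
    have c3 : quadraticChar F (β * β') = 1 := by rw [map_mul, c1, c2]; norm_num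
    obtain ⟨t, ht⟩ := (quadraticChar_one_iff_isSquare (mul_ne_zero hβ0 hβ0')).1 c3
    have e : β = β' * (t / β') ^ 2 := by
      field_simp
      rw [ht, sq]
    refine ⟨t / β', fun h0 => hβ0 ?_, e⟩
    rw [e, h0]; ring
  -- Bézout coefficients write `w ^ 2` as a `(q ^ d + 1)`-th power times a norm.
  obtain ⟨u, v, huv⟩ : ∃ u v : ℤ,
      2 = ((q ^ d + 1 : ℕ) : ℤ) * u + ((q ^ l + 1 : ℕ) : ℤ) * v := by
    have hg : ((Nat.gcd (q ^ d + 1) (q ^ l + 1) : ℕ) : ℤ) ∣ ((2 : ℕ) : ℤ) :=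
      Int.natCast_dvd_natCast.2 (gcd_pow_add_one_dvd_two_s2 q l d hgcd hparity)
    obtain ⟨k, hk⟩ := hg
    rw [Nat.gcd_eq_gcd_ab] at hk
    refine ⟨Nat.gcdA (q ^ d + 1) (q ^ l + 1) * k, Nat.gcdB (q ^ d + 1) (q ^ l + 1) * k, ?_⟩
    linear_combination hk
  have hw2 : w ^ 2 = (w ^ u) ^ (q ^ d + 1) * (w ^ v) ^ (q ^ l + 1) := by
    rw [← zpow_natCast (w ^ u), ← zpow_natCast (w ^ v), ← zpow_mul, ← zpow_mul, ← zpow_add₀ hw0,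
      mul_comm u, mul_comm v, ← huv]
    norm_cast
  have hb0 : w ^ u ≠ 0 := zpow_ne_zero u hw0
  have hv0 : w ^ v ≠ 0 := zpow_ne_zero v hw0
  generalize w ^ u = b at *
  generalize w ^ v = s at *
  have hs : (s ^ (q ^ l + 1)) ^ q ^ l = s ^ (q ^ l + 1) := by
    rw [pow_succ, mul_pow, hfix, mul_comm]
  obtain ⟨L, hL1, hL2, hL3⟩ := exists_isotopism h2 (iterateFrobenius F p (h * l))
    (iterateFrobenius F p (h * d)) (fun z => by rw [hpow, hpow, hfix]) ω β β' b
    (s ^ (q ^ l + 1))⁻¹ (by rw [hpow]; exact eq_neg_of_add_eq_zero_right hωtr) hb0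
    (inv_ne_zero (pow_ne_zero _ hv0)) (by rw [map_inv₀, hpow, hs]) (by
      have : s ^ (q ^ l + 1) ≠ 0 := pow_ne_zero _ hv0
      rw [hpow, ← pow_succ, hw, hw2]
      field_simp)
  refine ⟨b, hb0, L, hL1, hL2, fun x y => ?_⟩
  have := hL3 x y
  simp only [hpow] at this
  exact this
end

section
/- Let ξ be a nonzero element of F = GF(q^(2l)) satisfying ξ^(q^(l+d)−1) = β^(1−q^l), where β is a nonsquare in F and l + d is odd. Then ξ^(q^l+1) lies in the subfield 𝔽_q and is a nonsquare in 𝔽_q (i.e., ξ^(q^l+1) ≠ w^2 for every w ∈ 𝔽_q). -/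
/-!
Write `N = q ^ l + 1` and `M = q ^ (l + d) - 1`. As `N * (q ^ l - 1) = |F| - 1`, raising the
hypothesis on `ξ` to the power `N` gives `(ξ ^ N) ^ M = 1`, and also `(ξ ^ N) ^ (q ^ l - 1) = 1`.
Since `gcd (q ^ l - 1, M) = q ^ gcd (l, l + d) - 1 = q - 1`, the element `ξ ^ N` lies in the
subfield of order `q`.

If `ξ ^ N = w ^ 2` with `w` in that subfield, then
`β ^ ((|F| - 1) / 2) = (β ^ (q ^ l - 1)) ^ (N / 2) = (ξ ^ M) ^ (-N / 2) = (ξ ^ N) ^ (-M / 2) =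
w ^ (-M) = 1`, the last step because `q - 1` divides `M`. By Euler's criterion `β` would then be a
square.
-/


/-- Let ξ be a nonzero element of F = GF(q^(2l)) satisfying
ξ^(q^(l+d)−1) = β^(1−q^l), where β is a nonsquare in F and l + d is odd.
Then ξ^(q^l+1) lies in the subfield 𝔽_q (i.e. is fixed by x ↦ x^q) and is a
nonsquare in 𝔽_q (i.e., ξ^(q^l+1) ≠ w^2 for every w ∈ 𝔽_q). -/
theorem bh_xi_power_nonsquare (p h l d q : ℕ) (hp : p.Prime) (hpodd : Odd p)
    (hh : 0 < h) (hq : q = p ^ h) (hl : 1 < l) (hd1 : 1 ≤ d) (hd2 : d ≤ 2 * l * h - 1)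
    (hgcd : Nat.gcd l d = 1) (hparity : Odd (l + d))
    (F : Type*) [Field F] [Fintype F] (hcard : Fintype.card F = q ^ (2 * l))
    (β : F) (hβ : ∀ w : F, β ≠ w ^ 2)
    (ξ : F) (hξ0 : ξ ≠ 0) (hξ : ξ ^ (q ^ (l + d) - 1) = β ^ (1 - (q : ℤ) ^ l)) :
    (ξ ^ (q ^ l + 1)) ^ q = ξ ^ (q ^ l + 1) ∧
      ∀ w : F, w ^ q = w → ξ ^ (q ^ l + 1) ≠ w ^ 2 := by
  have hqodd : Odd q := hq ▸ hpodd.pow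
  have hq1 : 1 ≤ q := hqodd.pos
  have hβ0 : β ≠ 0 := by simpa using hβ 0
  have hL : 1 ≤ q ^ l := Nat.one_le_pow _ _ hq1
  -- the hypothesis on `ξ`, freed from the negative exponent
  have key : ξ ^ (q ^ (l + d) - 1) * β ^ (q ^ l - 1) = 1 := by
    rw [hξ, ← zpow_natCast, ← zpow_add₀ hβ0]
    push_cast [Nat.cast_sub hL]
    simp
  have hfac : (q ^ l + 1) * (q ^ l - 1) = Fintype.card F - 1 := by
    rw [hcard, mul_comm 2 l, pow_mul]
    simpa using (Nat.sq_sub_sq (q ^ l) 1).symm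
  have hη0 : ξ ^ (q ^ l + 1) ≠ 0 := pow_ne_zero _ hξ0
  refine ⟨?_, ?_⟩
  · have h1 : (ξ ^ (q ^ l + 1)) ^ (q ^ l - 1) = 1 := by
      rw [← pow_mul, hfac, FiniteField.pow_card_sub_one_eq_one ξ hξ0]
    have h2 : (ξ ^ (q ^ l + 1)) ^ (q ^ (l + d) - 1) = 1 := by
      have := congrArg (· ^ (q ^ l + 1)) key
      simp only [mul_pow, one_pow] at this
      rw [← pow_mul β, mul_comm (q ^ l - 1), hfac,
        FiniteField.pow_card_sub_one_eq_one β hβ0, mul_one] at this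
      rw [pow_right_comm, this]
    have h3 := Nat.dvd_gcd (orderOf_dvd_of_pow_eq_one h1) (orderOf_dvd_of_pow_eq_one h2)
    rw [Nat.pow_sub_one_gcd_pow_sub_one, Nat.gcd_self_add_right, hgcd, pow_one] at h3
    have h4 := orderOf_dvd_iff_pow_eq_one.mp h3
    rw [← pow_sub_one_mul (by omega : q ≠ 0), h4, one_mul]
  · intro w hw hsq
    have hw0 : w ≠ 0 := by
      rintro rfl
      exact hη0 (by simpa using hsq)
    have hw1 : w ^ (q - 1) = 1 := by
      apply mul_right_cancel₀ hw0
      rw [← pow_succ, Nat.sub_add_cancel hq1, hw, one_mul]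
    have hwM : w ^ (q ^ (l + d) - 1) = 1 := by
      obtain ⟨k, hk⟩ : q - 1 ∣ q ^ (l + d) - 1 := by
        simpa using Nat.sub_dvd_pow_sub_pow q 1 (l + d)
      rw [hk, pow_mul, hw1, one_pow]
    obtain ⟨n, hn⟩ : Even (q ^ l + 1) := hqodd.pow.add_one
    obtain ⟨m, hm⟩ : Even (q ^ (l + d) - 1) := Nat.Odd.sub_odd hqodd.pow odd_one
    have hchar : ringChar F ≠ 2 := by
      rw [Ne, FiniteField.even_card_iff_char_two, hcard]
      have : Odd (q ^ (2 * l)) := hqodd.pow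
      rw [Nat.odd_iff] at this
      omega
    have hhalf : Fintype.card F / 2 = (q ^ l - 1) * n := by
      have hcodd : Odd (Fintype.card F) := hcard ▸ hqodd.pow
      have : 2 * ((q ^ l - 1) * n) = Fintype.card F - 1 := by
        rw [← hfac, hn]; ring
      rw [Nat.odd_iff] at hcodd
      omega
    have hξn : (ξ ^ (q ^ (l + d) - 1)) ^ n = 1 := by
      calc (ξ ^ (q ^ (l + d) - 1)) ^ n = (ξ ^ (q ^ l + 1)) ^ m := by
            rw [hm, hn, ← pow_mul, ← pow_mul]; ring_nf
        _ = w ^ (q ^ (l + d) - 1) := by rw [hsq, hm, ← pow_mul, two_mul]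
        _ = 1 := hwM
    have hβsq : IsSquare β := by
      rw [FiniteField.isSquare_iff hchar hβ0, hhalf, pow_mul]
      have := congrArg (· ^ n) key
      simpa only [mul_pow, one_pow, hξn, one_mul] using this
    obtain ⟨r, hr⟩ := hβsq
    exact hβ r (by rw [hr, sq])
end

section
/- Let q be a power of an odd prime, let s be a nonsquare in 𝔽_q, and let a, b ∈ 𝔽_q. Then the system of equations X² + s·Y² = a and 2·X·Y = b has a solution (X, Y) ∈ 𝔽_q × 𝔽_q if and only if a² − b²·s is a square in 𝔽_q. -/
/-!
Over the quadratic extension `K(√s)` the system says `(X + Y√s)² = a + b√s`, and taking norms gives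
`a² - b²s = (X² - sY²)²`. Conversely, if `a² - b²s = w²`, then `(a + w)/2 · (a - w)/2 = s(b/2)²`.
For `b ≠ 0` this is a nonsquare, so one of the two factors is a nonzero square `X²`,
and `Y = b/(2X)` works. For `b = 0`, either `a` is a square (take `Y = 0`) or `a s` is one,
because a product of two nonsquares of a finite field is a square (take `X = 0`).
The characteristic is not two because every element of a finite field of characteristic two is a
square.
-/

theorem isSquare_mul_of_not_isSquare {K : Type*} [Field K] [Fintype K] {u v : K}
    (hu : ¬ IsSquare u) (hv : ¬ IsSquare v) : IsSquare (u * v) := by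
  classical
  by_contra h
  have h1 := (quadraticChar_neg_one_iff_not_isSquare (F := K)).2 hu
  have h2 := (quadraticChar_neg_one_iff_not_isSquare (F := K)).2 hv
  have h3 := (quadraticChar_neg_one_iff_not_isSquare (F := K)).2 h
  rw [map_mul, h1, h2] at h3
  norm_num at h3

/-- The case `b ≠ 0` of the construction, once `(a + w)/2` is known to be a square; it is applied
with both signs of `w`. -/
theorem exists_solution_of_half_sum_eq_sq {K : Type*} [Field K] (h2 : (2 : K) ≠ 0)
    {s a b w x : K} (hs : s ≠ 0) (hb : b ≠ 0) (hw : a ^ 2 - b ^ 2 * s = w ^ 2)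
    (hx : (a + w) / 2 = x * x) : ∃ X Y : K, X ^ 2 + s * Y ^ 2 = a ∧ 2 * X * Y = b := by
  have hx' : a + w = 2 * x ^ 2 := by field_simp at hx; linear_combination hx
  have hx0 : x ≠ 0 := by
    rintro rfl
    have : b ^ 2 * s = 0 := by linear_combination (a - w) * hx' - hw
    exact mul_ne_zero (pow_ne_zero 2 hb) hs this
  refine ⟨x, b / (2 * x), ?_, by field_simp⟩
  have h4 : s * b ^ 2 = (a - w) * (2 * x ^ 2) := by linear_combination (a - w) * hx' - hw
  field_simp
  linear_combination h4 - 2 * x ^ 2 * hx'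

/-- Let q be a power of an odd prime, let s be a nonsquare in 𝔽_q, and
let a, b ∈ 𝔽_q. Then the system of equations X² + s·Y² = a and 2·X·Y = b has a
solution (X, Y) ∈ 𝔽_q × 𝔽_q if and only if a² − b²·s is a square in 𝔽_q. -/
theorem quadratic_system_solvable_iff (p n q : ℕ) (hp : p.Prime) (hpodd : Odd p)
    (hn : 0 < n) (hq : q = p ^ n)
    (K : Type*) [Field K] [Fintype K] (hcard : Fintype.card K = q)
    (s a b : K) (hs : ∀ w : K, s ≠ w ^ 2) :
    (∃ X Y : K, X ^ 2 + s * Y ^ 2 = a ∧ 2 * X * Y = b) ↔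
      ∃ w : K, a ^ 2 - b ^ 2 * s = w ^ 2 := by
  have hsq : ¬ IsSquare s := by
    rintro ⟨r, hr⟩
    exact hs r (by rw [hr, sq])
  have hs0 : s ≠ 0 := by simpa using hs 0
  have h2 : (2 : K) ≠ 0 :=
    Ring.two_ne_zero fun h => hsq (FiniteField.isSquare_of_char_two h s)
  constructor
  · rintro ⟨X, Y, rfl, rfl⟩
    exact ⟨X ^ 2 - s * Y ^ 2, by ring⟩
  · rintro ⟨w, hw⟩
    by_cases hb : b = 0
    · subst hb
      by_cases ha : IsSquare a
      · obtain ⟨r, rfl⟩ := ha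
        exact ⟨r, 0, by ring, by ring⟩
      · obtain ⟨r, hr⟩ := isSquare_mul_of_not_isSquare ha hsq
        refine ⟨0, r / s, ?_, by ring⟩
        field_simp
        linear_combination -hr
    · by_cases h₁ : IsSquare ((a + w) / 2)
      · obtain ⟨x, hx⟩ := h₁
        exact exists_solution_of_half_sum_eq_sq h2 hs0 hb hw hx
      by_cases h₂ : IsSquare ((a + -w) / 2)
      · obtain ⟨x, hx⟩ := h₂
        exact exists_solution_of_half_sum_eq_sq h2 hs0 hb (by rw [hw, neg_sq]) hx
      -- Otherwise the product of the two halves, `s * (b / 2) ^ 2`, would be a square.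
      obtain ⟨r, hr⟩ := isSquare_mul_of_not_isSquare h₁ h₂
      refine absurd ?_ (hs (2 * r / b))
      field_simp at hr ⊢
      linear_combination hr - hw
end

section
/- Assume l > 2 and let d, d' be integers with 1 ≤ d, d' ≤ l − 1, gcd(l, d) = gcd(l, d') = 1, and l + d, l + d' both odd. Then there exist additive (𝔽_p-linear) bijections N and L of F with L(x ∗_d y) = N(x) ∗_{d'} N(y) for all x, y ∈ F (i.e., BH(q, l, d) and BH(q, l, d') are strongly isotopic) if and only if d = d'. -/
namespace BHaux

variable {p : ℕ} [Fact p.Prime] {F : Type*} [Field F] [Fintype F] [Algebra (ZMod p) F]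

/-! ### Linearized polynomials and their coefficients -/

/-- Every additive endomorphism of `F` is a linearized polynomial: the automorphisms are
linearly independent over `F`, and there are `[F : 𝔽_p] = dim_F End_{𝔽_p}(F)` of them. -/
theorem exists_coeff (L : F → F) (hL : ∀ x y, L (x + y) = L x + L y) :
    ∃ c : Gal(F/ZMod p) → F, ∀ x, L x = ∑ g, c g * g x := by
  let L' : F →ₗ[ZMod p] F := (AddMonoidHom.mk' L hL).toZModLinearMap p
  have hli : LinearIndependent F (fun g : Gal(F/ZMod p) => (g : F →ₐ[ZMod p] F).toLinearMap) :=
    (linearIndependent_algHom_toLinearMap (ZMod p) F F).comp _ AlgEquiv.coe_toAlgHom_injective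
  have hcard : Fintype.card Gal(F/ZMod p) = Module.finrank F (F →ₗ[ZMod p] F) := by
    rw [Module.finrank_linearMap_self, ← IsGalois.card_aut_eq_finrank, Nat.card_eq_fintype_card]
  have hspan := hli.span_eq_top_of_card_eq_finrank' hcard
  have hmem : L' ∈ Submodule.span F
      (Set.range fun g : Gal(F/ZMod p) => (g : F →ₐ[ZMod p] F).toLinearMap) := by
    rw [hspan]; trivial
  obtain ⟨c, hc⟩ := (Submodule.mem_span_range_iff_exists_fun F).1 hmem
  refine ⟨c, fun x => ?_⟩
  have := congrArg (fun f : F →ₗ[ZMod p] F => f x) hc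
  simpa [L'] using this.symm

/-- Uniqueness of the coefficients of a biadditive map: Dedekind independence of the characters
`(x, y) ↦ g x * h y` of the monoid `F × F`. -/
theorem coeff_eq {A B : Gal(F/ZMod p) → Gal(F/ZMod p) → F}
    (hAB : ∀ x y : F, ∑ g, ∑ h, A g h * (g x * h y) = ∑ g, ∑ h, B g h * (g x * h y)) :
    A = B := by
  let φ : Gal(F/ZMod p) × Gal(F/ZMod p) → (F × F →* F) := fun gh =>
    { toFun := fun xy => gh.1 xy.1 * gh.2 xy.2
      map_one' := by simp
      map_mul' := fun a b => by simp; ring }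
  have hφ : Function.Injective φ := by
    rintro ⟨g, h⟩ ⟨g', h'⟩ he
    have h1 : ∀ x, g x = g' x := fun x => by
      simpa [φ] using DFunLike.congr_fun he (x, 1)
    have h2 : ∀ x, h x = h' x := fun x => by
      simpa [φ] using DFunLike.congr_fun he (1, x)
    exact Prod.ext (AlgEquiv.ext h1) (AlgEquiv.ext h2)
  have hli := (linearIndependent_monoidHom (F × F) F).comp φ hφ
  rw [Fintype.linearIndependent_iff] at hli
  have := hli (fun gh => A gh.1 gh.2 - B gh.1 gh.2) (by
    funext ⟨x, y⟩
    simp only [Function.comp_apply, Finset.sum_apply, Pi.smul_apply, smul_eq_mul, Pi.zero_apply]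
    rw [Fintype.sum_prod_type]
    simp only [sub_mul, Finset.sum_sub_distrib]
    exact sub_eq_zero.2 (hAB x y))
  funext g h
  exact sub_eq_zero.1 (this (g, h))

/-! ### Biadditive maps with sparse coefficient matrix -/

/-- The exponents `±l, ±d`: the differences of indices of the monomials in `x ∗_d y`. -/
def Step (l d : ℕ) (e : ℤ) : Prop := e = l ∨ e = -l ∨ e = d ∨ e = -d

/-- The biadditive map `f` is a combination of the monomials `g x * h y` whose indices
`g`, `h` differ by `σ ^ e` with `e ∈ {±l, ±d}`. -/
def Sparse (σ : Gal(F/ZMod p)) (l d : ℕ) (f : F → F → F) : Prop :=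
  ∃ A : Gal(F/ZMod p) → Gal(F/ZMod p) → F,
    (∀ x y, f x y = ∑ g, ∑ h, A g h * (g x * h y)) ∧
      ∀ g h, A g h ≠ 0 → ∃ e, Step l d e ∧ g = σ ^ e * h

theorem Sparse.add {σ : Gal(F/ZMod p)} {l d : ℕ} {f f' : F → F → F}
    (hf : Sparse σ l d f) (hf' : Sparse σ l d f') : Sparse σ l d (fun x y => f x y + f' x y) := by
  obtain ⟨A, hA, hA'⟩ := hf
  obtain ⟨B, hB, hB'⟩ := hf'
  refine ⟨fun g h => A g h + B g h, fun x y => ?_, fun g h hne => ?_⟩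
  · simp only [hA, hB, add_mul, Finset.sum_add_distrib]
  · by_cases h0 : A g h = 0
    · exact hB' g h (fun h1 => hne (by simp [h0, h1]))
    · exact hA' g h h0

theorem Sparse.smul {σ : Gal(F/ZMod p)} {l d : ℕ} {f : F → F → F} (c : F)
    (hf : Sparse σ l d f) : Sparse σ l d (fun x y => c * f x y) := by
  obtain ⟨A, hA, hA'⟩ := hf
  refine ⟨fun g h => c * A g h, fun x y => ?_, fun g h hne => hA' g h (right_ne_zero_of_mul hne)⟩
  simp only [hA, Finset.mul_sum, mul_assoc]

theorem Sparse.sum {σ : Gal(F/ZMod p)} {l d : ℕ} {ι : Type*} (s : Finset ι)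
    {f : ι → F → F → F} (hf : ∀ i, Sparse σ l d (f i)) :
    Sparse σ l d (fun x y => ∑ i ∈ s, f i x y) := by
  classical
  induction s using Finset.induction_on with
  | empty => exact ⟨0, by simp, by simp⟩
  | insert a s ha ih => simpa only [Finset.sum_insert ha] using (hf a).add ih

theorem Sparse.monomial {σ : Gal(F/ZMod p)} {l d : ℕ} (c : F) {g h : Gal(F/ZMod p)} {e : ℤ}
    (he : Step l d e) (hgh : g = σ ^ e * h) : Sparse σ l d (fun x y => c * (g x * h y)) := by
  classical
  refine ⟨fun g' h' => if g' = g ∧ h' = h then c else 0, fun x y => ?_, fun g' h' hne => ?_⟩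
  · rw [Finset.sum_eq_single g, Finset.sum_eq_single h]
    · simp
    · intro b _ hb; simp [hb]
    · simp
    · intro b _ hb; simp [hb]
    · simp
  · have : g' = g ∧ h' = h := by
      by_contra hcon
      simp [hcon] at hne
    rw [this.1, this.2]
    exact ⟨e, he, hgh⟩

/-- The Budaghyan–Helleseth multiplication with `σ` in place of `x ↦ x ^ q`. -/
def mul (σ : Gal(F/ZMod p)) (l d : ℕ) (β ω x y : F) : F :=
  (σ ^ l) x * y + x * (σ ^ l) y +
    (β * ((σ ^ d) x * y + x * (σ ^ d) y) +
      (σ ^ l) β * (σ ^ l) ((σ ^ d) x * y + x * (σ ^ d) y)) * ω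

/-- The six monomials of `k ∘ mul` have indices differing by a power `±l` or `±d` of `σ`. -/
theorem sparse_mul (σ : Gal(F/ZMod p)) (hσ : ∀ g : Gal(F/ZMod p), Commute g σ)
    (l d : ℕ) (β ω : F) (k : Gal(F/ZMod p)) :
    Sparse σ l d (fun x y => k (mul σ l d β ω x y)) := by
  have key : ∀ (c : F) (i j : ℕ), Step l d ((i : ℤ) - j) →
      Sparse σ l d (fun x y => c * ((k * σ ^ i) x * (k * σ ^ j) y)) := by
    intro c i j hij
    refine Sparse.monomial c hij ?_
    rw [((hσ k).pow_right i).eq, ((hσ k).pow_right j).eq, ← mul_assoc, ← zpow_natCast σ j,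
      ← zpow_add, sub_add_cancel, zpow_natCast]
  have h := ((((key 1 l 0 (by simp [Step])).add (key 1 0 l (by simp [Step]))).add
    ((key (k (β * ω)) d 0 (by simp [Step])).add (key (k (β * ω)) 0 d (by simp [Step])))).add
    ((key (k ((σ ^ l) β * ω)) (l + d) l (by simp [Step])).add
      (key (k ((σ ^ l) β * ω)) l (l + d) (by simp [Step]))))
  convert h using 3 with x y
  simp only [mul, map_add, map_mul, AlgEquiv.mul_apply, pow_zero, AlgEquiv.one_apply, pow_add]
  ring

theorem sparse_comp_mul (σ : Gal(F/ZMod p)) (hσ : ∀ g : Gal(F/ZMod p), Commute g σ)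
    (l d : ℕ) (β ω : F) (L : F → F) (hL : ∀ x y, L (x + y) = L x + L y) :
    Sparse σ l d (fun x y => L (mul σ l d β ω x y)) := by
  obtain ⟨c, hc⟩ := exists_coeff (p := p) L hL
  simp only [hc]
  exact Sparse.sum _ fun k => (sparse_mul σ hσ l d β ω k).smul (c k)

/-! ### The coefficient comparison -/

theorem apply_sum (t : Gal(F/ZMod p)) (a : Gal(F/ZMod p) → F) (x : F) :
    t (∑ g, a g * g x) = ∑ g, t (a (t⁻¹ * g)) * g x := by
  rw [map_sum]
  refine Fintype.sum_equiv (Equiv.mulLeft t) _ _ fun g => ?_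
  simp

/-- Whatever expansion of a sparse map is used, its coefficients vanish off the allowed pairs. -/
theorem sparse_coeff {σ : Gal(F/ZMod p)} {l d : ℕ} {f : F → F → F} (hf : Sparse σ l d f)
    {B : Gal(F/ZMod p) → Gal(F/ZMod p) → F}
    (hB : ∀ x y, f x y = ∑ g, ∑ h, B g h * (g x * h y)) (g h : Gal(F/ZMod p))
    (hgh : ∀ e, Step l d e → g ≠ σ ^ e * h) : B g h = 0 := by
  obtain ⟨A, hA, hA'⟩ := hf
  have : A = B := coeff_eq fun x y => by rw [← hA, hB]
  by_contra hne
  rw [← this] at hne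
  obtain ⟨e, he, h1⟩ := hA' g h hne
  exact hgh e he h1

theorem dvd_small {l e : ℤ} (h : 2 * l ∣ e) (h1 : -(4 * l) < e) (h2 : e < 4 * l) :
    e = 0 ∨ e = 2 * l ∨ e = -(2 * l) := by
  obtain ⟨k, rfl⟩ := h
  have hl : 0 < l := by linarith
  have hk1 : -2 < k := by nlinarith
  have hk2 : k < 2 := by nlinarith
  have : k = -1 ∨ k = 0 ∨ k = 1 := by omega
  rcases this with rfl | rfl | rfl <;> simp

theorem sum_mul_sum' (u v : Gal(F/ZMod p) → F) (x y : F) :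
    (∑ g, u g * g x) * (∑ g, v g * g y) = ∑ g, ∑ h, u g * v h * (g x * h y) := by
  rw [Finset.sum_mul_sum]
  exact Finset.sum_congr rfl fun g _ => Finset.sum_congr rfl fun h _ => by ring

/-- The isotopism theorem, with `x ↦ x ^ q` replaced by a central automorphism `σ` of order
`2 * l`, for additive `L` and nonzero additive `N`. -/
theorem core (σ : Gal(F/ZMod p)) (hσ : ∀ g : Gal(F/ZMod p), Commute g σ) (l d d' : ℕ)
    (hord : orderOf σ = 2 * l) (h2 : (2 : F) ≠ 0)
    (hd1 : 1 ≤ d) (hd2 : d < l) (hd'1 : 1 ≤ d') (hd'2 : d' < l)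
    (h3 : 3 * d ≠ l) (h3' : 3 * d ≠ 2 * l)
    (β ω : F) (hβ : β ≠ 0) (hω : ω ≠ 0) (hωσ : (σ ^ l) ω = -ω)
    (N L : F → F) (hN0 : ∃ x, N x ≠ 0) (hN : ∀ x y, N (x + y) = N x + N y)
    (hL : ∀ x y, L (x + y) = L x + L y)
    (hLN : ∀ x y, L (mul σ l d β ω x y) = mul σ l d' β ω (N x) (N y)) : d = d' := by
  by_contra hne
  obtain ⟨a, ha⟩ := exists_coeff (p := p) N hN
  have hzz : ∀ i j : ℤ, σ ^ i = σ ^ j → (2 * l : ℤ) ∣ j - i := fun i j hij => by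
    have := (zpow_eq_zpow_iff_modEq.1 hij).dvd
    rwa [hord, Nat.cast_mul, Nat.cast_ofNat] at this
  have hll : σ ^ l * σ ^ l = 1 := by rw [← pow_add, ← two_mul, ← hord, pow_orderOf_eq_one]
  have hττ : ∀ x, (σ ^ l) ((σ ^ l) x) = x := fun x => by
    rw [← AlgEquiv.mul_apply, hll, AlgEquiv.one_apply]
  -- with `τ = σ ^ l`: the coefficients of `τ ∘ N`, `σ ^ d' ∘ N` and `σ ^ d' ∘ τ ∘ N`
  set b : Gal(F/ZMod p) → F := fun g => (σ ^ l) (a ((σ ^ l)⁻¹ * g)) with hb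
  set u : Gal(F/ZMod p) → F := fun g => (σ ^ d') (a ((σ ^ d')⁻¹ * g)) with hu
  set v : Gal(F/ZMod p) → F := fun g => (σ ^ d') (b ((σ ^ d')⁻¹ * g)) with hv
  have hX : ∀ x, (σ ^ l) (N x) = ∑ g, b g * g x := fun x => by rw [ha, apply_sum]
  have hU : ∀ x, (σ ^ d') (N x) = ∑ g, u g * g x := fun x => by rw [ha, apply_sum]
  have hV : ∀ x, (σ ^ l) ((σ ^ d') (N x)) = ∑ g, v g * g x := fun x => by
    rw [← AlgEquiv.mul_apply, ← pow_add, add_comm, pow_add, AlgEquiv.mul_apply, hX, apply_sum]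
  have hsp := sparse_comp_mul σ hσ l d β ω L hL
  have hspτ := sparse_comp_mul σ hσ l d β ω (fun x => (σ ^ l) (L x))
    (fun x y => by rw [hL, map_add])
  -- `x ∗_d' y` has one component fixed by `τ` and one negated by it; adding `τ ∘ L` to `L`
  -- isolates the first, whose coefficient matrix has rank at most two
  have hplus := sparse_coeff (hsp.add hspτ) (B := fun g h => 2 * (b g * a h + a g * b h))
    (fun x y => by
      have : L (mul σ l d β ω x y) + (σ ^ l) (L (mul σ l d β ω x y))
          = 2 * ((σ ^ l) (N x) * N y + N x * (σ ^ l) (N y)) := by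
        rw [hLN, mul]
        simp only [map_add, map_mul, hττ, hωσ]
        ring
      rw [this, hX, hX, ha x, ha y, sum_mul_sum', sum_mul_sum', ← Finset.sum_add_distrib,
        Finset.mul_sum]
      refine Finset.sum_congr rfl fun g _ => ?_
      rw [← Finset.sum_add_distrib, Finset.mul_sum]
      refine Finset.sum_congr rfl fun h _ => ?_
      ring)
  -- subtracting `τ ∘ L` isolates the component negated by `τ`
  have hminus := sparse_coeff (hsp.add (hspτ.smul (-1)))
    (B := fun g h => 2 * ω * (β * (u g * a h + a g * u h) + (σ ^ l) β * (v g * b h + b g * v h)))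
    (fun x y => by
      have : L (mul σ l d β ω x y) + -1 * (σ ^ l) (L (mul σ l d β ω x y))
          = 2 * ω * (β * ((σ ^ d') (N x) * N y + N x * (σ ^ d') (N y)) +
            (σ ^ l) β * ((σ ^ l) ((σ ^ d') (N x)) * (σ ^ l) (N y) +
              (σ ^ l) (N x) * (σ ^ l) ((σ ^ d') (N y)))) := by
        rw [hLN, mul]
        simp only [map_add, map_mul, hττ, hωσ]
        ring
      rw [this, hV, hV, hU, hU, hX, hX, ha x, ha y]
      simp only [sum_mul_sum']
      simp only [← Finset.sum_add_distrib, Finset.mul_sum]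
      refine Finset.sum_congr rfl fun g _ => Finset.sum_congr rfl fun h _ => ?_
      ring)
  have hstep : ∀ {e : ℤ} {n : ℤ}, Step l d e → 2 * (l : ℤ) ∣ n + e → -(3 * l : ℤ) < n →
      n < 3 * l → n + e = 0 ∨ n + e = 2 * l ∨ n + e = -(2 * l) := by
    intro e n he hdvd h1 h2
    refine dvd_small hdvd ?_ ?_ <;> (unfold Step at he; omega)
  -- diagonal entries of the rank-two matrix vanish
  have hab : ∀ g, a g ≠ 0 → b g = 0 := by
    intro g hg
    have := hplus g g (fun e he hge => by
      have h1 : σ ^ (0 : ℤ) = σ ^ e := by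
        rw [zpow_zero]; exact (mul_eq_right.1 hge.symm).symm
      have h2 := hstep (n := 0) he (by simpa using hzz _ _ h1) (by omega) (by omega)
      unfold Step at he
      omega)
    have h4 : 2 * 2 * (a g * b g) = 0 := by linear_combination this
    simpa [h2, hg] using h4
  have hbτ : ∀ g, b (σ ^ l * g) = (σ ^ l) (a g) := fun g => by simp [hb]
  -- two indices in the support of `a` differ by `σ ^ (e - l)` with `e ∈ {±l, ±d}`
  have hsupp : ∀ g g', a g ≠ 0 → a g' ≠ 0 → ∃ e, Step l d e ∧ σ ^ l * g' = σ ^ e * g := by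
    intro g g' hg hg'
    by_contra! hcon
    have := hplus (σ ^ l * g') g hcon
    rw [hab g hg, hbτ, mul_zero, add_zero] at this
    exact mul_ne_zero h2 (mul_ne_zero (by simpa only [ne_eq, map_eq_zero] using hg') hg) this
  obtain ⟨c, hc⟩ : ∃ c, a c ≠ 0 := by
    by_contra! hcon
    obtain ⟨x, hx⟩ := hN0
    exact hx (by rw [ha]; simp [hcon])
  have hsuppc : ∀ i j : ℤ, a (σ ^ i * c) ≠ 0 → a (σ ^ j * c) ≠ 0 →
      ∃ e, Step l d e ∧ (2 * l : ℤ) ∣ i - j - l + e := by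
    intro i j hi hj
    obtain ⟨e, he, h1⟩ := hsupp _ _ hi hj
    refine ⟨e, he, ?_⟩
    rw [← mul_assoc, ← mul_assoc, mul_left_inj, ← zpow_natCast, ← zpow_add, ← zpow_add] at h1
    have := hzz _ _ h1
    convert this using 1
    ring
  have hc0 : a (σ ^ (0 : ℤ) * c) ≠ 0 := by simpa using hc
  -- a nonzero value would put both `c` and `σ ^ (d' - l) * c` in the support of `a`,
  -- so that `d' = d`
  have hbh : b (σ ^ d' * c) = 0 := by
    by_contra hcon
    have h1 : a (σ ^ ((d' : ℤ) - l) * c) ≠ 0 := by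
      intro h0
      apply hcon
      simp only [hb]
      rw [← mul_assoc, ← zpow_natCast, ← zpow_natCast, ← zpow_neg, ← zpow_add,
        neg_add_eq_sub, h0, map_zero]
    obtain ⟨e, he, h2⟩ := hsuppc _ _ hc0 h1
    have h3 := hstep he h2 (by omega) (by omega)
    unfold Step at he
    omega
  -- otherwise `c` and `σ ^ (±d') * c` all lie in the support of `a`, which forces `d' = l - d`
  -- and then `l ∣ 3 * d`
  have huah : u c * a (σ ^ d' * c) = 0 := by
    by_contra hcon
    have h1 : a (σ ^ (d' : ℤ) * c) ≠ 0 := by simpa using right_ne_zero_of_mul hcon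
    have h1' : a (σ ^ (-d' : ℤ) * c) ≠ 0 := by
      intro h0
      apply left_ne_zero_of_mul hcon
      simp only [hu]
      rw [← zpow_natCast, ← zpow_neg, h0, map_zero]
    obtain ⟨e, he, h2⟩ := hsuppc _ _ hc0 h1
    obtain ⟨e', he', h2'⟩ := hsuppc _ _ h1' h1
    have h3 := hstep he h2 (by omega) (by omega)
    have h4 : -(2 * (d' : ℤ)) - l + e' = 0 ∨ -(2 * (d' : ℤ)) - l + e' = 2 * l ∨
        -(2 * (d' : ℤ)) - l + e' = -(2 * l) := by
      apply dvd_small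
      · convert h2' using 1; ring
      · unfold Step at he'; omega
      · unfold Step at he'; omega
    unfold Step at he he'
    omega
  -- in the entry at `(c, σ ^ d' * c)` only the term `β * a c * σ ^ d' (a c)` survives, yet the
  -- difference `d'` is not one of `±l, ±d` modulo `2 * l`
  have hfin := hminus c (σ ^ d' * c) (fun e he hge => by
    rw [← mul_assoc, ← zpow_natCast, ← zpow_add] at hge
    have h1 : σ ^ (0 : ℤ) = σ ^ (e + d') := by
      rw [zpow_zero]; exact (mul_eq_right.1 hge.symm).symm
    have h2 := hstep (n := d') he (by have := hzz _ _ h1; rwa [sub_zero, add_comm] at this)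
      (by omega) (by omega)
    unfold Step at he
    omega)
  have huh : u (σ ^ d' * c) = (σ ^ d') (a c) := by simp [hu]
  rw [huah, hbh, hab c hc, huh, mul_zero, zero_mul, add_zero, mul_zero, add_zero, zero_add] at hfin
  exact mul_ne_zero (mul_ne_zero h2 hω) (mul_ne_zero hβ
    (mul_ne_zero hc (by simpa only [ne_eq, map_eq_zero] using hc))) hfin

end BHaux

/-! ### The finite field of order `q ^ (2 * l)` -/

/-- Assume l > 2 and let d, d' be integers with 1 ≤ d, d' ≤ l − 1,
gcd(l, d) = gcd(l, d') = 1, and l + d, l + d' both odd. Then BH(q, l, d) and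
BH(q, l, d') are strongly isotopic if and only if d = d'. -/
theorem bh_strongly_isotopic_iff (p h l d d' q : ℕ) (hp : p.Prime) (hpodd : Odd p)
    (hh : 0 < h) (hq : q = p ^ h) (hl : 2 < l)
    (hd1 : 1 ≤ d) (hd2 : d ≤ l - 1) (hgd : Nat.gcd l d = 1) (hod : Odd (l + d))
    (hd'1 : 1 ≤ d') (hd'2 : d' ≤ l - 1) (hgd' : Nat.gcd l d' = 1) (hod' : Odd (l + d'))
    (F : Type*) [Field F] [Fintype F] (hcard : Fintype.card F = q ^ (2 * l))
    (β ω : F) (hβ : ∀ w : F, β ≠ w ^ 2) (hω : ω ≠ 0) (hωtr : ω + ω ^ q ^ l = 0) :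
    (∃ N L : F → F, Function.Bijective N ∧ (∀ x y : F, N (x + y) = N x + N y) ∧
        Function.Bijective L ∧ (∀ x y : F, L (x + y) = L x + L y) ∧
        ∀ x y : F, L (bhMul q l d β ω x y) = bhMul q l d' β ω (N x) (N y)) ↔
      d = d' := by
  constructor
  · rintro ⟨N, L, hNb, hN, -, hL, hLN⟩
    -- for `l = 3` the parity conditions leave only `d = d' = 2`
    by_cases hl3 : l = 3
    · subst hl3
      rcases hod with ⟨r, hr⟩
      rcases hod' with ⟨s, hs⟩
      omega
    have : Fact p.Prime := ⟨hp⟩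
    have hcard' : Fintype.card F = p ^ (h * (2 * l)) := by rw [hcard, hq, ← pow_mul]
    have : CharP F p := charP_of_card_eq_prime_pow hcard'
    let _ : Algebra (ZMod p) F := ZMod.algebra F p
    have hp2 : p ≠ 2 := by rintro rfl; exact absurd hpodd (by decide)
    have h2 : (2 : F) ≠ 0 := Ring.two_ne_zero (by rwa [ringChar.eq F p])
    let φ : Gal(F/ZMod p) := FiniteField.frobeniusAlgEquivOfAlgebraic (ZMod p) F
    have hφ : ∀ n x, (φ ^ n) x = x ^ p ^ n := fun n x => by
      rw [AlgEquiv.coe_pow, FiniteField.coe_frobeniusAlgEquivOfAlgebraic_iterate, ZMod.card]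
    have hfin : Module.finrank (ZMod p) F = h * (2 * l) := by
      have h1 := Module.card_eq_pow_finrank (K := ZMod p) (V := F)
      rw [ZMod.card, hcard'] at h1
      exact (Nat.pow_right_injective hp.two_le h1).symm
    have hordφ : orderOf φ = h * (2 * l) := by
      rw [FiniteField.orderOf_frobeniusAlgEquivOfAlgebraic, hfin]
    have hord : orderOf (φ ^ h) = 2 * l := by
      rw [orderOf_pow_of_dvd hh.ne' (hordφ ▸ dvd_mul_right _ _), hordφ, Nat.mul_div_cancel_left _ hh]
    have hσ : ∀ n x, ((φ ^ h) ^ n) x = x ^ q ^ n := fun n x => by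
      rw [← pow_mul, hφ, hq, pow_mul]
    have hcomm : ∀ g : Gal(F/ZMod p), Commute g (φ ^ h) := fun g => by
      refine AlgEquiv.ext fun x => ?_
      rw [AlgEquiv.mul_apply, AlgEquiv.mul_apply, hφ, hφ, map_pow]
    have hmul : ∀ e x y, bhMul q l e β ω x y = BHaux.mul (φ ^ h) l e β ω x y := fun e x y => by
      simp only [bhMul, BHaux.mul, hσ]
    -- `l ∣ 3 * d` would force `l ∣ 3`
    have h3 : ¬ l ∣ 3 * d := fun hdvd => by
      have h1 : l ∣ 3 := Nat.Coprime.dvd_of_dvd_mul_right hgd hdvd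
      have h2 := Nat.le_of_dvd (by norm_num) h1
      omega
    refine BHaux.core (φ ^ h) hcomm l d d' hord h2 hd1 (by omega) hd'1 (by omega)
      (fun h0 => h3 (by rw [h0])) (fun h0 => h3 (by rw [h0]; exact dvd_mul_left _ _)) β ω
      (fun h0 => hβ 0 (by rw [h0]; simp)) hω ?_ N L ?_ hN hL ?_
    · rw [hσ]
      exact eq_neg_of_add_eq_zero_right hωtr
    · obtain ⟨x, hx⟩ := hNb.2 1
      exact ⟨x, by rw [hx]; exact one_ne_zero⟩
    · intro x y
      rw [← hmul, ← hmul, hLN]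
  · rintro rfl
    exact ⟨id, id, Function.bijective_id, fun _ _ => rfl, Function.bijective_id,
      fun _ _ => rfl, fun _ _ => rfl⟩
end

section
/- In the Section 3 setup, suppose b_i ≠ 0 for some index i. Then for every index j such that j − i taken modulo 2lh does not belong to the set {0, (l+d)h, (l−d)h}, one has b_j = 0 and b_{j+(l−d')h} = 0 (subscripts modulo 2lh). -/
/-!
Write `φ_s` for the automorphism `x ↦ x ^ p ^ s` of `F`, with `s` modulo `M = 2lh`. Since
`1, ω` split `F` into the `±1`-eigenspaces of `φ_{lh}`, the identity `L (x ∗_d y) = N x ∗_{d'} N y`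
can be added to, or subtracted from, its image under `φ_{lh}`; this isolates the two parts
`φ_{lh}(N x) N y + N x φ_{lh}(N y)` and `E + φ_{lh} E`, with
`E = β (φ_{d'h}(N x) N y + N x φ_{d'h}(N y))`, of the right-hand side, each as an additive function
of `x ∗_d y`. Every additive map is a linearized polynomial (`exists_eq_sum_frob`), so both parts
are combinations of monomials `φ_s x · φ_t y` with `t - s ∈ {lh, dh, -dh}` (`DiffIn.comp`), and by
uniqueness of coefficients (`HasCoef.eq_zero`) all their other coefficients vanish.

With `c s` the coefficient of `φ_s` in `N`, the diagonal coefficient `(i, i)` of the first part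
gives `c (i + lh) = 0`, and then the coefficient `(i, j + lh)` gives `c j = 0`. The diagonal
coefficient `(i, i)` of the second part now gives `c (i - d'h) = 0`, and its coefficient
`(i, j + lh)` reduces to `β c_i φ_{d'h}(c (j + lh - d'h))`, so `c (j + (l - d')h) = 0`.
-/

/-! ### Linearized polynomials with exponents modulo `M` -/

set_option linter.unusedSectionVars false

/-- The automorphism `x ↦ x ^ p ^ s` of `F`, with the exponent `s` read modulo `M`. -/
noncomputable def frob {F : Type*} [Field F] (p M : ℕ) [Fact p.Prime] [CharP F p]
    (s : ZMod M) : F →+* F :=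
  iterateFrobenius F p s.val

section
variable {F : Type*} [Field F] [Fintype F] {p M : ℕ} [Fact p.Prime] [CharP F p] [NeZero M]

theorem pow_eq_frob (hc : Fintype.card F = p ^ M) (n : ℕ) (x : F) :
    x ^ p ^ n = frob p M (n : ZMod M) x := by
  have hper (k : ℕ) (y : F) : y ^ p ^ (M * k) = y := by
    rw [pow_mul, ← hc, FiniteField.pow_card_pow]
  rw [frob, iterateFrobenius_def, ZMod.val_natCast]
  conv_lhs => rw [← Nat.mod_add_div n M, pow_add, pow_mul, hper]

theorem frob_frob (hc : Fintype.card F = p ^ M) (s t : ZMod M) (x : F) :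
    frob p M s (frob p M t x) = frob p M (s + t) x := by
  conv_lhs => rw [frob, iterateFrobenius_def, frob, iterateFrobenius_def]
  rw [← pow_mul, ← pow_add, pow_eq_frob hc]
  push_cast
  rw [ZMod.natCast_zmod_val, ZMod.natCast_zmod_val, add_comm]

theorem frob_zero (hc : Fintype.card F = p ^ M) (x : F) : frob p M 0 x = x := by
  have := pow_eq_frob hc 0 x
  simpa using this.symm

/-- A linearized polynomial of degree less than `p ^ M` vanishing on a field of `p ^ M` elements
has more roots than its degree, so its coefficients are zero. -/
theorem eq_zero_of_sum_frob (hc : Fintype.card F = p ^ M) (a : ZMod M → F)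
    (h : ∀ x : F, ∑ s, a s * frob p M s x = 0) : a = 0 := by
  have hp1 : 1 < p := (Fact.out : p.Prime).one_lt
  let P : Polynomial F := ∑ s, Polynomial.C (a s) * Polynomial.X ^ (p ^ s.val)
  have hP : P = 0 := by
    refine Polynomial.eq_zero_of_natDegree_lt_card_of_eval_eq_zero P Function.injective_id
      (fun x => ?_) ?_
    · simpa [P, Polynomial.eval_finsetSum, frob, iterateFrobenius_def] using h x
    · rw [hc]
      have hle : P.natDegree ≤ p ^ (M - 1) := by
        refine Polynomial.natDegree_sum_le_of_forall_le _ _ fun s _ => ?_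
        refine (Polynomial.natDegree_C_mul_X_pow_le _ _).trans ?_
        exact Nat.pow_le_pow_right hp1.le (Nat.le_sub_one_of_lt s.val_lt)
      exact hle.trans_lt (Nat.pow_lt_pow_right hp1 (Nat.sub_lt (NeZero.pos M) one_pos))
  funext t
  have ht : P.coeff (p ^ t.val) = 0 := by rw [hP, Polynomial.coeff_zero]
  have hinj (s : ZMod M) : p ^ t.val = p ^ s.val ↔ t = s :=
    ⟨fun e => ZMod.val_injective M (Nat.pow_right_injective hp1 e), fun e => e ▸ rfl⟩
  simpa [P, Polynomial.finsetSum_coeff, Polynomial.coeff_X_pow, hinj] using ht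

/-- The `M` powers of Frobenius are independent in the `M`-dimensional `F`-space of additive
self-maps of `F`, so every additive map is a linearized polynomial. -/
theorem exists_eq_sum_frob (hc : Fintype.card F = p ^ M) (f : F →+ F) :
    ∃ a : ZMod M → F, ∀ x, f x = ∑ s, a s * frob p M s x := by
  let _ : Algebra (ZMod p) F := ZMod.algebra F p
  let e (s : ZMod M) : F →ₗ[ZMod p] F := (frob p M s : F →+* F).toAddMonoidHom.toZModLinearMap p
  have he : LinearIndependent F e := by
    rw [Fintype.linearIndependent_iff]
    intro g hg
    refine congrFun (eq_zero_of_sum_frob hc g fun x => ?_)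
    simpa [e] using LinearMap.congr_fun hg x
  have hrank : Module.finrank (ZMod p) F = M := by
    have h1 := Module.card_eq_pow_finrank (K := ZMod p) (V := F)
    rw [hc, ZMod.card] at h1
    exact (Nat.pow_right_injective (Fact.out : p.Prime).one_lt h1).symm
  have hspan := he.span_eq_top_of_card_eq_finrank'
    (by rw [ZMod.card, Module.finrank_linearMap_self, hrank])
  have hf : f.toZModLinearMap p ∈ Submodule.span F (Set.range e) := by
    rw [hspan]; trivial
  obtain ⟨a, ha⟩ := (Submodule.mem_span_range_iff_exists_fun F).1 hf
  refine ⟨a, fun x => ?_⟩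
  simpa [e] using (LinearMap.congr_fun ha x).symm

/-! ### Coefficients of bilinear forms -/

/-- `B` is the bilinear form `∑ m s t * x ^ p ^ s * y ^ p ^ t`. -/
def HasCoef (p : ℕ) [Fact p.Prime] [CharP F p] (B : F → F → F) (m : ZMod M → ZMod M → F) : Prop :=
  ∀ x y, B x y = ∑ s, ∑ t, m s t * frob p M s x * frob p M t y

theorem HasCoef.unique (hc : Fintype.card F = p ^ M) {B : F → F → F} {m n : ZMod M → ZMod M → F}
    (hm : HasCoef p B m) (hn : HasCoef p B n) : m = n := by
  have key (y : F) := eq_zero_of_sum_frob hc (fun s => ∑ t, (m s t - n s t) * frob p M t y)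
    fun x => by
      have h := (hm x y).symm.trans (hn x y)
      rw [← sub_eq_zero, ← Finset.sum_sub_distrib] at h
      rw [← h]
      refine Finset.sum_congr rfl fun s _ => ?_
      rw [← Finset.sum_sub_distrib, Finset.sum_mul]
      exact Finset.sum_congr rfl fun t _ => by ring
  funext s t
  exact sub_eq_zero.1 (congrFun (eq_zero_of_sum_frob hc (fun t => m s t - n s t)
    fun y => congrFun (key y) s) t)

theorem HasCoef.add {B C : F → F → F} {m n : ZMod M → ZMod M → F}
    (hm : HasCoef p B m) (hn : HasCoef p C n) :
    HasCoef p (fun x y => B x y + C x y) (fun s t => m s t + n s t) := fun x y => by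
  simp only [hm x y, hn x y, add_mul, Finset.sum_add_distrib]

theorem HasCoef.smul {B : F → F → F} {m : ZMod M → ZMod M → F} (a : F)
    (hm : HasCoef p B m) :
    HasCoef p (fun x y => a * B x y) (fun s t => a * m s t) := fun x y => by
  simp only [hm x y, Finset.mul_sum, mul_assoc]

theorem HasCoef.frob_comp (hc : Fintype.card F = p ^ M) {B : F → F → F} {m : ZMod M → ZMod M → F}
    (r : ZMod M) (hm : HasCoef p B m) :
    HasCoef p (fun x y => frob p M r (B x y))
      (fun s t => frob p M r (m (s - r) (t - r))) := fun x y => by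
  simp only [hm x y, map_sum, map_mul, frob_frob hc]
  refine Fintype.sum_equiv (Equiv.addLeft r) _ _ fun s => ?_
  refine Fintype.sum_equiv (Equiv.addLeft r) _ _ fun t => ?_
  simp

theorem HasCoef.mul {f g : F → F} {a b : ZMod M → F} (hf : ∀ x, f x = ∑ s, a s * frob p M s x)
    (hg : ∀ x, g x = ∑ s, b s * frob p M s x) :
    HasCoef p (fun x y => f x * g y) (fun s t => a s * b t) := fun x y => by
  simp only [hf, hg, Finset.sum_mul_sum]
  exact Finset.sum_congr rfl fun s _ => Finset.sum_congr rfl fun t _ => by ring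

theorem frob_sum (hc : Fintype.card F = p ^ M) {f : F → F} {a : ZMod M → F}
    (hf : ∀ x, f x = ∑ s, a s * frob p M s x) (r : ZMod M) (x : F) :
    frob p M r (f x) = ∑ s, frob p M r (a (s - r)) * frob p M s x := by
  simp only [hf, map_sum, map_mul, frob_frob hc]
  rw [← Equiv.sum_comp (Equiv.addLeft r) fun s => frob p M r (a (s - r)) * frob p M s x]
  simp

/-- `B` is a combination of monomials `x ^ p ^ s * y ^ p ^ t` with `t - s ∈ T`. -/
def DiffIn (p : ℕ) [Fact p.Prime] [CharP F p] (T : Set (ZMod M)) (B : F → F → F) : Prop :=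
  ∃ m : ZMod M → ZMod M → F, HasCoef p B m ∧ ∀ s t, t - s ∉ T → m s t = 0

theorem DiffIn.add {T : Set (ZMod M)} {B C : F → F → F} (hB : DiffIn p T B) (hC : DiffIn p T C) :
    DiffIn p T (fun x y => B x y + C x y) := by
  obtain ⟨m, hm, hm0⟩ := hB
  obtain ⟨n, hn, hn0⟩ := hC
  exact ⟨_, hm.add hn, fun s t h => by simp [hm0 s t h, hn0 s t h]⟩

theorem DiffIn.smul {T : Set (ZMod M)} {B : F → F → F} (a : F) (hB : DiffIn p T B) :
    DiffIn p T (fun x y => a * B x y) := by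
  obtain ⟨m, hm, hm0⟩ := hB
  exact ⟨_, hm.smul a, fun s t h => by simp [hm0 s t h]⟩

theorem DiffIn.frob_comp (hc : Fintype.card F = p ^ M) {T : Set (ZMod M)} {B : F → F → F}
    (r : ZMod M) (hB : DiffIn p T B) : DiffIn p T (fun x y => frob p M r (B x y)) := by
  obtain ⟨m, hm, hm0⟩ := hB
  exact ⟨_, hm.frob_comp hc r, fun s t h => by
    rw [hm0 _ _ (by simpa using h), map_zero]⟩

theorem DiffIn.sum {T : Set (ZMod M)} {ι : Type*} (S : Finset ι) {B : ι → F → F → F}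
    (hB : ∀ k ∈ S, DiffIn p T (B k)) : DiffIn p T (fun x y => ∑ k ∈ S, B k x y) := by
  classical
  induction S using Finset.induction_on with
  | empty => exact ⟨0, fun x y => by simp, fun _ _ _ => rfl⟩
  | insert k S hk ih =>
    simp only [Finset.sum_insert hk]
    exact (hB k (Finset.mem_insert_self k S)).add
      (ih fun i hi => hB i (Finset.mem_insert_of_mem hi))

/-- Composing with an additive map, i.e. a linearized polynomial, shifts both exponents of each
monomial simultaneously and so preserves their difference. -/
theorem DiffIn.comp (hc : Fintype.card F = p ^ M) {T : Set (ZMod M)} {B : F → F → F}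
    (G : F →+ F) (hB : DiffIn p T B) : DiffIn p T (fun x y => G (B x y)) := by
  obtain ⟨a, ha⟩ := exists_eq_sum_frob hc G
  simp only [ha]
  exact DiffIn.sum _ fun k _ => (hB.frob_comp hc k).smul (a k)

theorem DiffIn.monomial {T : Set (ZMod M)} {s t : ZMod M} (h : t - s ∈ T) :
    DiffIn p T (fun x y : F => frob p M s x * frob p M t y) := by
  refine ⟨_, HasCoef.mul (a := Pi.single s 1) (b := Pi.single t 1) (fun x => ?_) (fun x => ?_),
    fun s' t' h' => ?_⟩
  · simp [Pi.single_apply]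
  · simp [Pi.single_apply]
  · by_cases h1 : s' = s
    · by_cases h2 : t' = t
      · subst h1 h2; exact absurd h h'
      · simp [Pi.single_apply, h2]
    · simp [Pi.single_apply, h1]

/-- By uniqueness of coefficients, any coefficient family of a form whose monomials all have exponent
difference in `T` vanishes outside `T`. -/
theorem HasCoef.eq_zero (hc : Fintype.card F = p ^ M) {T : Set (ZMod M)} {B : F → F → F}
    {m : ZMod M → ZMod M → F} (hm : HasCoef p B m) (hB : DiffIn p T B) {s t : ZMod M}
    (h : t - s ∉ T) : m s t = 0 := by
  obtain ⟨n, hn, hn0⟩ := hB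
  rw [hm.unique hc hn, hn0 s t h]

end

/-- Section 3 setup: L, N are additive bijections of F with
L(x ∗_d y) = N(x) ∗_{d'} N(y), and N(x) = Σ_{i<2lh} b_i x^(p^i) with subscripts of b
read modulo 2lh. If b_i ≠ 0, then for every index j with j − i (mod 2lh) not in
{0, (l+d)h, (l−d)h} one has b_j = 0 and b_{j+(l−d')h} = 0. -/
theorem bh_coeff_vanish (p h l d d' q : ℕ) (hp : p.Prime) (hpodd : Odd p)
    (hh : 0 < h) (hq : q = p ^ h) (hl : 2 < l)
    (hd1 : 1 ≤ d) (hd2 : d ≤ l - 1) (hgd : Nat.gcd l d = 1) (hod : Odd (l + d))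
    (hd'1 : 1 ≤ d') (hd'2 : d' ≤ l - 1) (hgd' : Nat.gcd l d' = 1) (hod' : Odd (l + d'))
    (F : Type*) [Field F] [Fintype F] (hcard : Fintype.card F = q ^ (2 * l))
    (β ω : F) (hβ : ∀ w : F, β ≠ w ^ 2) (hω : ω ≠ 0) (hωtr : ω + ω ^ q ^ l = 0)
    (L N : F → F) (hLb : Function.Bijective L) (hLa : ∀ x y : F, L (x + y) = L x + L y)
    (hNb : Function.Bijective N) (hNa : ∀ x y : F, N (x + y) = N x + N y)
    (hiso : ∀ x y : F, L (bhMul q l d β ω x y) = bhMul q l d' β ω (N x) (N y))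
    (b : ℕ → F) (hbper : ∀ i : ℕ, b (i + 2 * l * h) = b i)
    (hNc : ∀ x : F, N x = ∑ i ∈ Finset.range (2 * l * h), b i * x ^ p ^ i)
    (i : ℕ) (hbi : b i ≠ 0) (j : ℕ)
    (hij : ((j : ZMod (2 * l * h)) - (i : ZMod (2 * l * h))) ∉
      ({(0 : ZMod (2 * l * h)), (((l + d) * h : ℕ) : ZMod (2 * l * h)),
        (((l - d) * h : ℕ) : ZMod (2 * l * h))} : Set (ZMod (2 * l * h)))) :
    b j = 0 ∧ b (j + (l - d') * h) = 0 := by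
  have : Fact p.Prime := ⟨hp⟩
  set M := 2 * l * h with hM
  have hMpos : 0 < M := by positivity
  have : NeZero M := ⟨hMpos.ne'⟩
  have hc : Fintype.card F = p ^ M := by rw [hcard, hq, ← pow_mul, hM]; ring_nf
  have : CharP F p := charP_of_card_eq_prime_pow hc
  have h2 : (2 : F) ≠ 0 := Ring.two_ne_zero (by
    rw [ringChar.eq F p]; rintro rfl; exact absurd hpodd (by decide))
  have hβ0 : β ≠ 0 := by simpa using hβ 0
  set Λ : ZMod M := ((l * h : ℕ) : ZMod M) with hΛ
  set D : ZMod M := ((d * h : ℕ) : ZMod M) with hD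
  set D' : ZMod M := ((d' * h : ℕ) : ZMod M) with hD'
  have hq_pow (e : ℕ) (x : F) : x ^ q ^ e = frob p M ((e * h : ℕ) : ZMod M) x := by
    rw [hq, ← pow_mul, mul_comm h e, pow_eq_frob hc]
  have hΛΛ : Λ + Λ = 0 := by
    rw [hΛ, ← Nat.cast_add, ← two_mul, ← mul_assoc, ← hM, ZMod.natCast_self]
  have hcast_ne (n : ℕ) (h0 : 0 < n) (hn : n < M) : (n : ZMod M) ≠ 0 := by
    rw [Ne, ZMod.natCast_eq_zero_iff]
    exact Nat.not_dvd_of_pos_of_lt h0 hn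
  have hΛ0 : Λ ≠ 0 := hcast_ne _ (by positivity) (by
    rw [hM]; exact Nat.mul_lt_mul_of_pos_right (by omega) hh)
  have hD0 : D ≠ 0 := hcast_ne _ (by positivity) (by
    rw [hM]; exact Nat.mul_lt_mul_of_pos_right (by omega) hh)
  -- The exponent differences occurring in `x ∗_d y`; note that `-Λ = Λ`.
  let T : Set (ZMod M) := {Λ, D, -D}
  have hT0 (s : ZMod M) : s - s ∉ T := by
    simp [T, hΛ0.symm, hD0.symm, eq_comm (a := (0 : ZMod M)), hD0]
  have hΛT : -Λ ∈ T := by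
    rw [neg_eq_of_add_eq_zero_left hΛΛ]; simp [T]
  have hmul : DiffIn p T (bhMul q l d β ω) := by
    have mon (s t : ZMod M) (hst : t - s ∈ T) := DiffIn.monomial (F := F) (p := p) hst
    have m1 := (mon Λ 0 (by simpa using hΛT)).add (mon 0 Λ (by simp [T]))
    have m2 := ((mon D 0 (by simp [T])).add (mon 0 D (by simp [T]))).smul β
    have m3 := m1.add ((m2.add (m2.frob_comp hc Λ)).smul ω)
    convert m3 using 1
    funext x y
    simp only [bhMul, hq_pow, ← hΛ, ← hD, frob_zero hc, map_mul]
    ring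
  let c (s : ZMod M) : F := b s.val
  have hbc (n : ℕ) : b n = c n := by
    have hper : Function.Periodic b M := hbper
    simp only [c, ZMod.val_natCast, hper.map_mod_nat]
  have hN (x : F) : N x = ∑ s, c s * frob p M s x := by
    rw [hNc, ← Fin.sum_univ_eq_sum_range (fun k => b k * x ^ p ^ k)]
    refine Finset.sum_bij (fun k _ => ((k : ℕ) : ZMod M)) (fun _ _ => Finset.mem_univ _)
      (fun u _ v _ huv => ?_) (fun s _ => ⟨⟨s.val, s.val_lt⟩, Finset.mem_univ _, by simp⟩)
      (fun u _ => ?_)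
    · have := congrArg ZMod.val huv
      rw [ZMod.val_natCast, ZMod.val_natCast, Nat.mod_eq_of_lt u.2, Nat.mod_eq_of_lt v.2] at this
      exact Fin.ext this
    · rw [← hbc, ← pow_eq_frob hc]
  have hω' : frob p M Λ ω = -ω := by
    rw [hΛ, ← hq_pow]; exact (neg_eq_of_add_eq_zero_right hωtr).symm
  have hinv (x : F) : frob p M Λ (frob p M Λ x) = x := by rw [frob_frob hc, hΛΛ, frob_zero hc]
  have hP := (HasCoef.mul (frob_sum hc hN Λ) hN).add (HasCoef.mul hN (frob_sum hc hN Λ))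
  have hE := ((HasCoef.mul (frob_sum hc hN D') hN).add
    (HasCoef.mul hN (frob_sum hc hN D'))).smul β
  have hQ := hE.add (hE.frob_comp hc Λ)
  let L₀ : F →+ F := AddMonoidHom.mk' L hLa
  let conj : F →+ F := (frob p M Λ : F →+* F).toAddMonoidHom
  -- With `P`, `Q` the forms of `hP`, `hQ`, one has `L (x ∗ y) = P + Q ω`, where `P`, `Q` are fixed
  -- and `ω` is negated by conjugation; the next two forms are thus `P` and `Q`.
  have hPT : DiffIn p T _ := (hmul.comp hc (L₀ + conj.comp L₀)).smul 2⁻¹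
  have hQT : DiffIn p T _ := (hmul.comp hc (L₀ - conj.comp L₀)).smul (2 * ω)⁻¹
  have hP0 {s t : ZMod M} (hst : t - s ∉ T) :
      frob p M Λ (c (s - Λ)) * c t + c s * frob p M Λ (c (t - Λ)) = 0 := by
    refine hP.eq_zero hc ?_ hst
    convert hPT using 1
    funext x y
    simp only [L₀, conj, AddMonoidHom.add_apply, AddMonoidHom.comp_apply, AddMonoidHom.mk'_apply,
      RingHom.toAddMonoidHom_eq_coe, AddMonoidHom.coe_coe, hiso]
    simp only [bhMul, hq_pow, ← hΛ, ← hD', map_add, map_mul, hω', hinv]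
    field_simp
    ring
  have hQ0 {s t : ZMod M} (hst : t - s ∉ T) := hQ.eq_zero hc (by
    convert hQT using 1
    funext x y
    simp only [L₀, conj, AddMonoidHom.sub_apply, AddMonoidHom.comp_apply, AddMonoidHom.mk'_apply,
      RingHom.toAddMonoidHom_eq_coe, AddMonoidHom.coe_coe, hiso]
    simp only [bhMul, hq_pow, ← hΛ, ← hD', map_add, map_mul, hω', hinv]
    field_simp
    ring) hst
  have hci : c i ≠ 0 := hbc i ▸ hbi
  have hld : (((l + d) * h : ℕ) : ZMod M) = Λ + D := by rw [add_mul, Nat.cast_add]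
  have hsub {e : ℕ} (he : e ≤ l) : (((l - e) * h : ℕ) : ZMod M) = Λ - ((e * h : ℕ) : ZMod M) := by
    rw [Nat.sub_mul, Nat.cast_sub (Nat.mul_le_mul_right h he)]
  have hijT : (j : ZMod M) + Λ - i ∉ T := by
    contrapose! hij
    rw [hld, hsub (by omega : d ≤ l), ← hD]
    simp only [T, Set.mem_insert_iff, Set.mem_singleton_iff] at hij ⊢
    rcases hij with e | e | e
    · left; linear_combination e
    · right; left; linear_combination e - hΛΛ
    · right; right; linear_combination e - hΛΛ
  have hiΛ : c (i - Λ) = 0 := by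
    have e := hP0 (hT0 i)
    rw [mul_comm (c i), ← two_mul] at e
    simpa [h2, hci] using e
  have hj : c j = 0 := by
    have e := hP0 hijT
    simpa [hiΛ, hci] using e
  have hiD : c (i - D') = 0 := by
    have e := hQ0 (hT0 i)
    rw [mul_comm (c i), ← two_mul] at e
    simpa [h2, hci, hβ0, hiΛ] using e
  have hjD : c (j + Λ - D') = 0 := by
    have e := hQ0 hijT
    simpa [hci, hβ0, hiΛ, hiD, hj] using e
  refine ⟨(hbc j).trans hj, ?_⟩
  rw [hbc, Nat.cast_add, hsub (by omega), ← hD', ← add_sub_assoc, hjD]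
end

section
/- In the Section 4 setup, the integer l is even and the integers d and d' are both odd. Moreover, for every index i with b_i ≠ 0 there exists a nonzero δ in the subfield 𝔽_{q^l} such that b·ξ^(q^l+1)·δ² − 2·a·δ + b = 0 and b_{i+lh} = b_i·ξ^(p^i)·δ^(p^i) ≠ 0 (subscripts modulo 2lh). -/
/-!
Write `x̄ = x ^ (q ^ l)`, `n = 2lh`, and let `φ_k (x) = x ^ (p ^ k)` for `k` in `ZMod n`; the
conjugation is `φ_m` with `m = lh`, and `m + m = 0`.

Since `ω̄ = -ω`, the trace of `X ∗_{d'} Y` to `𝔽_{q^l}` is `2 (X̄ Y + X Ȳ)`: the twisted part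
disappears.  So adding to the isotopism identity its own conjugate replaces `L'` by the additive
polynomial with coefficients `u_k = a_k + φ_m (a_{k+m})`, which satisfy `φ_m (u_k) = u_{k+m}`, and
the right-hand side by `2 (N̄'(x) N'(y) + N'(x) N̄'(y))`.  The Frobenius powers `φ_k` are distinct
characters, hence linearly independent, so coefficients of `φ_i(x) φ_j(y)` may be compared
(`exists_coeff`).  For `j = i` and `j = i + m` the `β`-terms do not contribute, and with
`t = u_i + u_{i+m}` this gives (`coeff_identities`)

* `t · φ_i(b ξ̄) = 4 b_i φ_m(b_{i+m})`,
* `t · φ_i(a) = 2 (b_i φ_m(b_i) + b_{i+m} φ_m(b_{i+m}))`.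

If `b_i ≠ 0`, define `δ` by `b_{i+m} = b_i φ_i(ξ δ)`.  As `t` is fixed by conjugation, the first
identity shows that `δ` lies in `𝔽_{q^l}`, and combining both gives `b ξ ξ̄ δ² - 2aδ + b = 0`
(`exists_delta`).

Finally `ξ ξ̄` lies in `𝔽_q` (`norm_mem_base`), so this is a quadratic over `𝔽_q` whose
discriminant is a nonsquare of `𝔽_q`; its roots are outside `𝔽_q` but in its quadratic extension,
so a root in `𝔽_{q^l}` forces `l` to be even (`even_of_root`).  Then `d` and `d'` are odd because
`l + d` and `l + d'` are.
-/

/-! ### Frobenius powers and coefficient comparison -/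

/-- The power `x ↦ x ^ (p ^ k)` of the Frobenius map, with exponent index `k` in `ZMod n`.  It is
used for a field with `p ^ n` elements, where it depends only on `k` modulo `n`. -/
def frobPow {F : Type*} [Field F] (p n : ℕ) (k : ZMod n) (x : F) : F := x ^ p ^ k.val

section FrobPow

variable {F : Type*} [Field F] {p n : ℕ}

theorem frobPow_zero_left [NeZero n] (x : F) : frobPow p n 0 x = x := by
  simp [frobPow]

theorem frobPow_mul (k : ZMod n) (x y : F) :
    frobPow p n k (x * y) = frobPow p n k x * frobPow p n k y := mul_pow _ _ _

theorem pow_pow_mod [Fintype F] (hc : Fintype.card F = p ^ n) (x : F) (j : ℕ) :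
    x ^ p ^ (j % n) = x ^ p ^ j := by
  have hper : ∀ k : ℕ, x ^ p ^ (j % n + n * k) = x ^ p ^ (j % n) := by
    intro k
    induction k with
    | zero => simp
    | succ k ih =>
      have h1 : p ^ (j % n + n * (k + 1)) = p ^ (j % n + n * k) * Fintype.card F := by
        rw [hc]; ring
      rw [h1, pow_mul, FiniteField.pow_card, ih]
  conv_rhs => rw [← Nat.mod_add_div j n]
  exact (hper _).symm

theorem frobPow_natCast [Fintype F] (hc : Fintype.card F = p ^ n) (j : ℕ) (x : F) :
    frobPow p n (j : ZMod n) x = x ^ p ^ j := by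
  rw [frobPow, ZMod.val_natCast, pow_pow_mod hc]

theorem frobPow_frobPow [Fintype F] [NeZero n] (hc : Fintype.card F = p ^ n) (j k : ZMod n)
    (x : F) : frobPow p n j (frobPow p n k x) = frobPow p n (j + k) x := by
  simp only [frobPow]
  rw [ZMod.val_add, pow_pow_mod hc, ← pow_mul, ← pow_add, add_comm]

theorem frobPow_add [Fact p.Prime] [CharP F p] (k : ZMod n) (x y : F) :
    frobPow p n k (x + y) = frobPow p n k x + frobPow p n k y := add_pow_char_pow _ _ _ _

theorem frobPow_sum [Fact p.Prime] [CharP F p] {ι : Type*} (s : Finset ι) (k : ZMod n)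
    (f : ι → F) : frobPow p n k (∑ i ∈ s, f i) = ∑ i ∈ s, frobPow p n k (f i) :=
  sum_pow_char_pow _ _ _ _

/-- Evaluating at a generator of the cyclic group `Fˣ` separates the Frobenius powers, since the
exponents `p ^ k` with `k < n` are all smaller than `p ^ n - 1` (here `p ≥ 3` matters). -/
theorem frobPow_injective [Fintype F] [NeZero n] (hp : 2 < p) (hc : Fintype.card F = p ^ n)
    (j k : ZMod n) (h : ∀ x : F, frobPow p n j x = frobPow p n k x) : j = k := by
  classical
  obtain ⟨g, hg⟩ := IsCyclic.exists_generator (α := Fˣ)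
  have ho : orderOf g = p ^ n - 1 := by
    rw [orderOf_eq_card_of_forall_mem_zpowers hg, Nat.card_eq_fintype_card, Fintype.card_units, hc]
  have hlt : ∀ i : ZMod n, p ^ i.val < orderOf g := by
    intro i
    have h1 : p ^ (i.val + 1) ≤ p ^ n := Nat.pow_le_pow_right (by omega) (ZMod.val_lt i)
    have h2 : 3 * p ^ i.val ≤ p ^ (i.val + 1) := by
      rw [pow_succ, mul_comm]; exact Nat.mul_le_mul_left _ hp
    have h3 : 0 < p ^ i.val := by positivity
    omega
  have hgg : g ^ p ^ j.val = g ^ p ^ k.val := by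
    ext; push_cast; exact h g
  have := pow_injOn_Iio_orderOf (hlt j) (hlt k) hgg
  exact ZMod.val_injective n (Nat.pow_right_injective (by omega) this)

/-- Coefficient extraction: there are `F`-linear functionals reading off the coefficient of
`x ^ (p ^ i) * y ^ (p ^ j)` from a function of two variables.  They exist because the Frobenius
powers, being distinct characters, are linearly independent. -/
theorem exists_coeff [Fintype F] [NeZero n] (hp : 2 < p) (hc : Fintype.card F = p ^ n) :
    ∃ E : ZMod n → ZMod n → ((F → F → F) →ₗ[F] F), ∀ i j r s : ZMod n, ∀ c : F,
      E i j (fun x y => c * frobPow p n r x * frobPow p n s y) =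
        if r = i ∧ s = j then c else 0 := by
  classical
  let χ : ZMod n → (F →* F) := fun k => powMonoidHom (p ^ k.val)
  have hχ : Function.Injective χ := fun j k h =>
    frobPow_injective hp hc j k fun x => DFunLike.congr_fun h x
  have hli := (linearIndependent_monoidHom F F).comp χ hχ
  obtain ⟨C, hC⟩ := LinearMap.exists_leftInverse_of_injective _ (LinearMap.ker_eq_bot.2 hli)
  have hCs : ∀ k : ZMod n, C (frobPow p n k) = Finsupp.single k 1 := by
    intro k
    have := LinearMap.congr_fun hC (Finsupp.single k 1)
    simp only [LinearMap.comp_apply, Finsupp.linearCombination_single, one_smul,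
      LinearMap.id_apply] at this
    exact this
  refine ⟨fun i j => Finsupp.lapply i ∘ₗ C ∘ₗ LinearMap.compLeft (Finsupp.lapply j ∘ₗ C) F, ?_⟩
  intro i j r s c
  have h1 : LinearMap.compLeft (Finsupp.lapply j ∘ₗ C) F
      (fun x y => c * frobPow p n r x * frobPow p n s y) =
        (c * (Finsupp.single s (1 : F)) j) • frobPow p n r := by
    funext x
    have : (fun y => c * frobPow p n r x * frobPow p n s y) =
        (c * frobPow p n r x) • frobPow p n s := by
      funext y; simp
    simp only [LinearMap.compLeft_apply, Function.comp_apply, LinearMap.comp_apply, this, map_smul,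
      hCs, Finsupp.lapply_apply, Pi.smul_apply, smul_eq_mul]
    ring
  simp only [LinearMap.comp_apply, h1, map_smul, hCs, Finsupp.lapply_apply, smul_eq_mul,
    Finsupp.single_apply]
  by_cases h2 : r = i <;> by_cases h3 : s = j <;> simp [h2, h3]

/-- The contribution of a monomial `c * φ_r(x) * φ_s(y)`, fed into the additive polynomial
`∑ u_k φ_k`, to the coefficient of `φ_i(x) * φ_j(y)`. -/
theorem coeff_mono [Fintype F] [NeZero n] (hc : Fintype.card F = p ^ n)
    (E : ZMod n → ZMod n → ((F → F → F) →ₗ[F] F)) (hE : ∀ i j r s : ZMod n, ∀ c : F,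
      E i j (fun x y => c * frobPow p n r x * frobPow p n s y) = if r = i ∧ s = j then c else 0)
    (u : ZMod n → F) (i j r s : ZMod n) (c : F) :
    E i j (fun x y => ∑ k, u k * frobPow p n k (c * frobPow p n r x * frobPow p n s y)) =
      if i - r + s = j then u (i - r) * frobPow p n (i - r) c else 0 := by
  have h1 : (fun x y => ∑ k, u k * frobPow p n k (c * frobPow p n r x * frobPow p n s y)) =
      ∑ k, fun x y => (u k * frobPow p n k c) * frobPow p n (k + r) x * frobPow p n (k + s) y := by
    funext x y
    simp only [Finset.sum_apply, frobPow_mul, frobPow_frobPow hc]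
    exact Finset.sum_congr rfl fun k _ => by ring
  rw [h1, map_sum]
  simp only [hE]
  rw [Finset.sum_eq_single (i - r)]
  · simp
  · intro k _ hk
    rw [if_neg]
    rintro ⟨h, -⟩
    exact hk (eq_sub_of_add_eq h)
  · simp

theorem coeff_prod
    (E : ZMod n → ZMod n → ((F → F → F) →ₗ[F] F)) [NeZero n] (hE : ∀ i j r s : ZMod n, ∀ c : F,
      E i j (fun x y => c * frobPow p n r x * frobPow p n s y) = if r = i ∧ s = j then c else 0)
    (v w : ZMod n → F) (i j : ZMod n) :
    E i j (fun x y => (∑ k, v k * frobPow p n k x) * (∑ k, w k * frobPow p n k y)) =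
      v i * w j := by
  have h1 : (fun x y => (∑ k, v k * frobPow p n k x) * (∑ k, w k * frobPow p n k y)) =
      ∑ k, ∑ k', fun x y => (v k * w k') * frobPow p n k x * frobPow p n k' y := by
    funext x y
    simp only [Finset.sum_apply, Finset.sum_mul_sum]
    exact Finset.sum_congr rfl fun k _ => Finset.sum_congr rfl fun k' _ => by ring
  rw [h1]
  simp only [map_sum, hE, ite_and]
  simp

/-- The two coefficient identities that drive the proof, obtained by comparing the coefficients of
`φ_i(x) φ_i(y)` and of `φ_i(x) φ_{i+m}(y)`.  The terms involving `β` have index differences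
`± e` and `± (e + m)` and so do not contribute to either. -/
theorem coeff_identities [Fintype F] [Fact p.Prime] [CharP F p] [NeZero n] (hp : 2 < p)
    (hc : Fintype.card F = p ^ n) (m e : ZMod n) (hm : m + m = 0) (hm0 : m ≠ 0) (he0 : e ≠ 0)
    (hem : e ≠ m) (a b ξ β ω : F) (ham : frobPow p n m a = a) (hbm : frobPow p n m b = b)
    (P : F → F → F)
    (hP : ∀ x y, P x y = frobPow p n m x * y + x * frobPow p n m y +
      (β * (frobPow p n e x * y + x * frobPow p n e y) + frobPow p n m β *
        frobPow p n m (frobPow p n e x * y + x * frobPow p n e y)) * ω)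
    (u v : ZMod n → F)
    (h : ∀ x y, ∑ k, u k * frobPow p n k (a * P x y + b * P (ξ * frobPow p n m x) y) =
      2 * (frobPow p n m (∑ k, v k * frobPow p n k x) * (∑ k, v k * frobPow p n k y) +
        (∑ k, v k * frobPow p n k x) * frobPow p n m (∑ k, v k * frobPow p n k y)))
    (i : ZMod n) :
    (u i + u (i + m)) * frobPow p n i (b * frobPow p n m ξ) =
        4 * (v i * frobPow p n m (v (i + m))) ∧
      (u i + u (i + m)) * frobPow p n i a =
        2 * (v i * frobPow p n m (v i) + v (i + m) * frobPow p n m (v (i + m))) := by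
  obtain ⟨E, hE⟩ := exists_coeff hp hc
  let g : F → ZMod n → ZMod n → (F → F → F) := fun c r s x y =>
    ∑ k, u k * frobPow p n k (c * frobPow p n r x * frobPow p n s y)
  have hL : (fun x y => ∑ k, u k * frobPow p n k (a * P x y + b * P (ξ * frobPow p n m x) y)) =
      g a m 0 + g a 0 m + g (a * β * ω) e 0 + g (a * β * ω) 0 e +
      g (a * frobPow p n m β * ω) (m + e) m + g (a * frobPow p n m β * ω) m (m + e) +
      g (b * frobPow p n m ξ) 0 0 + g (b * ξ) m m +
      g (b * β * frobPow p n e ξ * ω) (e + m) 0 + g (b * β * ξ * ω) m e +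
      g (b * frobPow p n m β * frobPow p n (m + e) ξ * ω) e m +
      g (b * frobPow p n m β * frobPow p n m ξ * ω) 0 (m + e) := by
    funext x y
    simp only [g, Pi.add_apply, ← Finset.sum_add_distrib, ← mul_add, ← frobPow_add]
    refine Finset.sum_congr rfl fun k _ => ?_
    congr 2
    have hme : m + (e + m) = e := by rw [add_left_comm, hm, add_zero]
    simp only [hP, frobPow_add, frobPow_mul, frobPow_frobPow hc, frobPow_zero_left, hm, hme]
    ring
  have hbar : ∀ x : F, frobPow p n m (∑ k, v k * frobPow p n k x) =
      ∑ k, frobPow p n m (v (k + m)) * frobPow p n k x := by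
    intro x
    rw [frobPow_sum, ← Equiv.sum_comp (Equiv.addRight m)]
    refine Finset.sum_congr rfl fun k _ => ?_
    rw [frobPow_mul, frobPow_frobPow hc, Equiv.coe_addRight]
    congr 2
    rw [add_left_comm, hm, add_zero]
  have hR : (fun x y => 2 * (frobPow p n m (∑ k, v k * frobPow p n k x) *
      (∑ k, v k * frobPow p n k y) +
        (∑ k, v k * frobPow p n k x) * frobPow p n m (∑ k, v k * frobPow p n k y))) =
      (2 : F) • ((fun x y => (∑ k, frobPow p n m (v (k + m)) * frobPow p n k x) *
        (∑ k, v k * frobPow p n k y)) + (fun x y => (∑ k, v k * frobPow p n k x) *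
          (∑ k, frobPow p n m (v (k + m)) * frobPow p n k y))) := by
    funext x y
    simp only [hbar, Pi.smul_apply, Pi.add_apply, smul_eq_mul]
  have hEq := hL.symm.trans ((funext₂ h).trans hR)
  have hmn : -m = m := neg_eq_of_add_eq_zero_left hm
  have him : i - m = i + m := by rw [sub_eq_add_neg, hmn]
  have himm : i + m + m = i := by rw [add_assoc, hm, add_zero]
  have hem0 : e + m ≠ 0 := fun h0 => hem ((eq_neg_of_add_eq_zero_left h0).trans hmn)
  have hme0 : m + e ≠ 0 := by rwa [add_comm]
  have hs1 : ∀ r s : ZMod n, i - r + s = i ↔ s = r := fun r s =>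
    ⟨fun h0 => by linear_combination h0, fun h0 => by linear_combination h0⟩
  have hs2 : ∀ r s : ZMod n, i - r + s = i + m ↔ s = r + m := fun r s =>
    ⟨fun h0 => by linear_combination h0, fun h0 => by linear_combination h0⟩
  constructor
  · have := congrArg (E i i) hEq
    simp only [map_add, map_smul, coeff_prod E hE, smul_eq_mul, g, coeff_mono hc E hE, hs1] at this
    rw [if_neg, if_neg, if_neg, if_neg, if_neg, if_neg, if_pos, if_pos, if_neg, if_neg, if_neg,
      if_neg] at this
    · rw [him, sub_zero] at this
      have hx : frobPow p n (i + m) (b * ξ) = frobPow p n i (b * frobPow p n m ξ) := by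
        rw [← frobPow_frobPow hc, frobPow_mul m, hbm]
      rw [hx] at this
      linear_combination this
    all_goals simp [hm0, he0, hem, hme0, hm0.symm, he0.symm, hem.symm, hem0.symm]
  · have := congrArg (E i (i + m)) hEq
    simp only [map_add, map_smul, coeff_prod E hE, smul_eq_mul, g, coeff_mono hc E hE, hs2] at this
    rw [if_pos, if_pos, if_neg, if_neg, if_neg, if_neg, if_neg, if_neg, if_neg, if_neg, if_neg,
      if_neg] at this
    · rw [him, sub_zero, himm] at this
      have hx : frobPow p n (i + m) a = frobPow p n i a := by
        rw [← frobPow_frobPow hc, ham]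
      rw [hx] at this
      linear_combination this
    all_goals simp [hm, hm0, he0, hem, hem0, hme0, hm0.symm, he0.symm, hem0.symm, add_assoc]

/-- The second half of the conclusion, in terms of the index group `ZMod n`.  The point is that
`u_i + u_{i+m}` is fixed by the involution `φ_m`, so the first coefficient identity shows that
`δ` is fixed by `φ_m`; eliminating `u_i + u_{i+m}` then yields the quadratic equation. -/
theorem exists_delta [Fintype F] [Fact p.Prime] [CharP F p] [NeZero n] (hp : 2 < p)
    (hc : Fintype.card F = p ^ n) (m : ZMod n) (hm : m + m = 0)
    (a b ξ : F) (hξ0 : ξ ≠ 0) (hb0 : b ≠ 0) (hbm : frobPow p n m b = b)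
    (u v : ZMod n → F) (hu : ∀ k, frobPow p n m (u k) = u (k + m)) (i : ZMod n)
    (h1 : (u i + u (i + m)) * frobPow p n i (b * frobPow p n m ξ) =
        4 * (v i * frobPow p n m (v (i + m))))
    (h2 : (u i + u (i + m)) * frobPow p n i a =
        2 * (v i * frobPow p n m (v i) + v (i + m) * frobPow p n m (v (i + m))))
    (hv : v i ≠ 0) :
    ∃ δ : F, δ ≠ 0 ∧ frobPow p n m δ = δ ∧
      b * (frobPow p n m ξ * ξ) * δ ^ 2 - 2 * a * δ + b = 0 ∧
      v (i + m) = v i * frobPow p n i ξ * frobPow p n i δ := by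
  have hne : ∀ (k : ZMod n) (x : F), x ≠ 0 → frobPow p n k x ≠ 0 := fun k x hx => pow_ne_zero _ hx
  have hz : ∀ k : ZMod n, frobPow p n k (0 : F) = 0 := fun k =>
    zero_pow (pow_ne_zero _ (by omega))
  have hinj : ∀ (k : ZMod n) (x y : F), frobPow p n k x = frobPow p n k y → x = y := by
    intro k x y hxy
    have := congrArg (frobPow p n (-k)) hxy
    simpa [frobPow_frobPow hc, frobPow_zero_left] using this
  have hcomm : ∀ x : F, frobPow p n m (frobPow p n i x) = frobPow p n i (frobPow p n m x) := by
    intro x; rw [frobPow_frobPow hc, frobPow_frobPow hc, add_comm]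
  have h2F : (2 : F) ≠ 0 := Ring.two_ne_zero (by rw [ringChar.eq F p]; omega)
  obtain ⟨δ, hδ⟩ : ∃ δ : F, frobPow p n i δ = v (i + m) / (v i * frobPow p n i ξ) :=
    ⟨frobPow p n (-i) (v (i + m) / (v i * frobPow p n i ξ)), by
      rw [frobPow_frobPow hc, add_neg_cancel, frobPow_zero_left]⟩
  have hvim : v (i + m) = v i * frobPow p n i ξ * frobPow p n i δ := by
    rw [hδ]
    have := hne i ξ hξ0
    field_simp
  rw [hvim] at h1 h2
  simp only [frobPow_mul, hcomm] at h1 h2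
  have hX' : frobPow p n i (frobPow p n m ξ) ≠ 0 := hne _ _ (hne _ _ hξ0)
  have hvm : frobPow p n m (v i) ≠ 0 := hne _ _ hv
  have h3 : (u i + u (i + m)) * frobPow p n i b =
      4 * (v i * frobPow p n m (v i)) * frobPow p n i (frobPow p n m δ) := by
    apply mul_right_cancel₀ hX'
    linear_combination h1
  have hmm : ∀ x : F, frobPow p n m (frobPow p n m x) = x := by
    intro x; rw [frobPow_frobPow hc, hm, frobPow_zero_left]
  have h4 : (u i + u (i + m)) * frobPow p n i b =
      4 * (v i * frobPow p n m (v i)) * frobPow p n i δ := by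
    have h5 := congrArg (frobPow p n m) h3
    have h4F : frobPow p n m (4 : F) = 4 := by
      have h1F : frobPow p n m (1 : F) = 1 := one_pow _
      have : (4 : F) = 1 + 1 + 1 + 1 := by norm_num
      rw [this, frobPow_add, frobPow_add, frobPow_add, h1F]
    simp only [frobPow_mul, frobPow_add, hu, hcomm, hbm, hmm, h4F] at h5
    rw [add_assoc i, hm, add_zero] at h5
    linear_combination h5
  have h4F : (4 : F) ≠ 0 := by
    have : (4 : F) = 2 * 2 := by norm_num
    rw [this]; exact mul_ne_zero h2F h2F
  have hδm : frobPow p n m δ = δ := by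
    apply hinj i
    apply mul_left_cancel₀ (mul_ne_zero h4F (mul_ne_zero hv hvm))
    rw [← h3, ← h4]
  rw [hδm] at h2
  refine ⟨δ, ?_, hδm, ?_, hvim⟩
  · rintro rfl
    -- `δ = 0` makes `u i + u (i + m)` vanish, hence also `2 * v i * φ_m (v i)`.
    rw [hz, mul_zero] at h4
    rcases mul_eq_zero.1 h4 with h | h
    · rw [h, hz] at h2
      apply mul_ne_zero h2F (mul_ne_zero hv hvm)
      linear_combination -h2
    · exact hne _ _ hb0 h
  · have h6 : frobPow p n i (b * (frobPow p n m ξ * ξ) * (δ * δ) + b) =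
        frobPow p n i (a * δ + a * δ) := by
      simp only [frobPow_mul, frobPow_add]
      apply mul_left_cancel₀ (mul_ne_zero h2F (mul_ne_zero hv hvm))
      linear_combination frobPow p n i a * h4 - frobPow p n i b * h2
    linear_combination hinj i _ _ h6

end FrobPow

/-! ### Arithmetic of `ξ` and parity of `l` -/

/-- An element fixed by two powers of `x ↦ x ^ q` with coprime exponents lies in `𝔽_q`. -/
theorem pow_eq_self_of_coprime {F : Type*} [Field F] {q l d : ℕ} (hg : Nat.gcd l d = 1) (x : F)
    (hl : x ^ q ^ l = x) (hd : x ^ q ^ (l + d) = x) : x ^ q = x := by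
  have hit : ∀ k : ℕ, (fun y : F => y ^ q)^[k] x = x ^ q ^ k := by
    intro k; rw [pow_iterate]
  have h1 : Function.IsPeriodicPt (fun y : F => y ^ q) l x := (hit l).trans hl
  have h2 : Function.IsPeriodicPt (fun y : F => y ^ q) (l + d) x := (hit _).trans hd
  have h3 := h1.gcd h2
  rw [Nat.gcd_self_add_right, hg] at h3
  simpa using h3.eq

theorem norm_mem_base {F : Type*} [Field F] [Fintype F] {q l d : ℕ} (hq : 0 < q)
    (hgd : Nat.gcd l d = 1) (hcard : Fintype.card F = q ^ (2 * l)) (β ξ : F) (hβ0 : β ≠ 0)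
    (hξ : ξ ^ (q ^ (l + d) - 1) = β ^ (1 - (q : ℤ) ^ l)) :
    (ξ ^ (q ^ l + 1)) ^ q = ξ ^ (q ^ l + 1) := by
  have hfull : ∀ x : F, x ^ (q ^ l * q ^ l) = x := by
    intro x
    have : q ^ l * q ^ l = Fintype.card F := by rw [hcard]; ring
    rw [this, FiniteField.pow_card]
  refine pow_eq_self_of_coprime hgd _ ?_ ?_
  · rw [← pow_mul, add_mul, one_mul, pow_add, hfull, pow_succ, mul_comm]
  · have h1 : (ξ ^ (q ^ l + 1)) ^ (q ^ (l + d) - 1) = 1 := by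
      rw [← pow_mul, mul_comm, pow_mul, hξ, ← zpow_natCast, ← zpow_mul]
      have : (1 - (q : ℤ) ^ l) * ((q ^ l + 1 : ℕ) : ℤ) = 1 - ((q ^ l * q ^ l : ℕ) : ℤ) := by
        push_cast; ring
      rw [this, zpow_sub₀ hβ0, zpow_natCast, hfull, zpow_one, div_self hβ0]
    have h2 : q ^ (l + d) = q ^ (l + d) - 1 + 1 := (Nat.sub_add_cancel (Nat.pow_pos hq)).symm
    rw [h2, pow_succ, h1, one_mul]

/-- A root `δ` in `𝔽_{q^l}` of a quadratic over `𝔽_q` whose discriminant is a nonsquare in `𝔽_q`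
forces `l` to be even: the square root `w = b N δ - a` of the (quarter) discriminant satisfies
`w ^ q = -w`, whence `w ^ (q ^ l) = (-1) ^ l * w`. -/
theorem even_of_root {F : Type*} [Field F] [Fintype F] {p q h l : ℕ} [Fact p.Prime] [CharP F p]
    (hp : Odd p) (hq : q = p ^ h) (a b N δ : F) (ha : a ^ q = a) (hb : b ^ q = b) (hN : N ^ q = N)
    (hns : ∀ w : F, w ^ q = w → a ^ 2 - b ^ 2 * N ≠ w ^ 2) (hδ : δ ^ q ^ l = δ)
    (hquad : b * N * δ ^ 2 - 2 * a * δ + b = 0) : Even l := by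
  by_contra hl
  rw [Nat.not_even_iff_odd] at hl
  have hqodd : Odd q := hq ▸ hp.pow
  have hsub : ∀ x y : F, (x - y) ^ q = x ^ q - y ^ q := by
    intro x y; rw [hq]; exact sub_pow_char_pow _ _ _
  have hfix : ∀ x : F, x ^ q = x → ∀ k : ℕ, x ^ q ^ k = x := by
    intro x hx k
    induction k with
    | zero => simp
    | succ k ih => rw [pow_succ, pow_mul, ih, hx]
  set w := b * N * δ - a with hw
  have hw2 : w ^ 2 = a ^ 2 - b ^ 2 * N := by
    rw [hw]; linear_combination b * N * hquad
  have hwl : w ^ q ^ l = w := by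
    have hqp : q ^ l = p ^ (h * l) := by rw [hq, pow_mul]
    rw [hw, hqp, sub_pow_char_pow, ← hqp, mul_pow, mul_pow, hδ, hfix a ha, hfix b hb, hfix N hN]
  have hsq : (w ^ q) ^ 2 = w ^ 2 := by
    rw [← pow_mul, mul_comm, pow_mul, hw2, hsub, mul_pow, hN, ← pow_mul, ← pow_mul, mul_comm 2 q,
      pow_mul, pow_mul, ha, hb]
  rcases sq_eq_sq_iff_eq_or_eq_neg.1 hsq with h1 | h1
  · exact hns w h1 hw2.symm
  · have hneg : ∀ k : ℕ, w ^ q ^ k = (-1) ^ k * w := by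
      intro k
      induction k with
      | zero => simp
      | succ k ih =>
        rw [pow_succ, pow_mul, ih, mul_pow, h1, ← pow_mul, mul_comm k q, pow_mul,
          hqodd.neg_one_pow]
        ring
    have h2 := hneg l
    rw [hwl, hl.neg_one_pow] at h2
    exact hns w (by rw [h1, neg_eq_neg_one_mul]; exact h2.symm) hw2.symm

/-! ### Passage from periodic sequences to `ZMod n` -/

theorem sum_range_eq_sum_frobPow {F : Type*} [Field F] {p n : ℕ} [NeZero n] (c : ℕ → F) (x : F) :
    ∑ i ∈ Finset.range n, c i * x ^ p ^ i = ∑ k : ZMod n, c k.val * frobPow p n k x := by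
  refine (Finset.sum_bij (fun k _ => k.val) ?_ ?_ ?_ ?_).symm
  · intro k _; exact Finset.mem_range.2 (ZMod.val_lt k)
  · intro j _ k _ hjk; exact ZMod.val_injective n hjk
  · intro i hi
    exact ⟨(i : ZMod n), Finset.mem_univ _, ZMod.val_cast_of_lt (Finset.mem_range.1 hi)⟩
  · intro k _; rfl

/-- Section 4 setup: the integer l is even and d, d' are both odd.
Moreover, for every index i with b_i ≠ 0 there exists a nonzero δ in the subfield
𝔽_{q^l} such that b·ξ^(q^l+1)·δ² − 2·a·δ + b = 0 and
b_{i+lh} = b_i·ξ^(p^i)·δ^(p^i) ≠ 0 (subscripts modulo 2lh). -/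
theorem bh_l_even_d_odd_gamma (p h l d d' q : ℕ) (hp : p.Prime) (hpodd : Odd p)
    (hh : 0 < h) (hq : q = p ^ h) (hl : 2 < l)
    (hd1 : 1 ≤ d) (hd2 : d ≤ l - 1) (hgd : Nat.gcd l d = 1) (hod : Odd (l + d))
    (hd'1 : 1 ≤ d') (hd'2 : d' ≤ l - 1) (hgd' : Nat.gcd l d' = 1) (hod' : Odd (l + d'))
    (F : Type*) [Field F] [Fintype F] (hcard : Fintype.card F = q ^ (2 * l))
    (β ω : F) (hβ : ∀ w : F, β ≠ w ^ 2) (hω : ω ≠ 0) (hωtr : ω + ω ^ q ^ l = 0)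
    (ξ : F) (hξ0 : ξ ≠ 0) (hξ : ξ ^ (q ^ (l + d) - 1) = β ^ (1 - (q : ℤ) ^ l))
    (a b : F) (ha : a ^ q = a) (hb : b ^ q = b)
    (hns : ∀ w : F, w ^ q = w → a ^ 2 - b ^ 2 * ξ ^ (q ^ l + 1) ≠ w ^ 2)
    (L' N' : F → F) (hL'b : Function.Bijective L')
    (hL'a : ∀ x y : F, L' (x + y) = L' x + L' y)
    (hN'b : Function.Bijective N') (hN'a : ∀ x y : F, N' (x + y) = N' x + N' y)
    (hiso : ∀ x y : F, L' (a * bhMul q l d β ω x y) +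
        L' (b * bhMul q l d β ω (ξ * x ^ q ^ l) y) = bhMul q l d' β ω (N' x) (N' y))
    (bb aa : ℕ → F) (hbbper : ∀ i : ℕ, bb (i + 2 * l * h) = bb i)
    (haaper : ∀ i : ℕ, aa (i + 2 * l * h) = aa i)
    (hN'c : ∀ x : F, N' x = ∑ i ∈ Finset.range (2 * l * h), bb i * x ^ p ^ i)
    (hL'c : ∀ x : F, L' x = ∑ i ∈ Finset.range (2 * l * h), aa i * x ^ p ^ i) :
    Even l ∧ Odd d ∧ Odd d' ∧
      ∀ i : ℕ, bb i ≠ 0 → ∃ δ : F, δ ≠ 0 ∧ δ ^ q ^ l = δ ∧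
        b * ξ ^ (q ^ l + 1) * δ ^ 2 - 2 * a * δ + b = 0 ∧
        bb (i + l * h) = bb i * ξ ^ p ^ i * δ ^ p ^ i ∧ bb (i + l * h) ≠ 0 := by
  have : Fact p.Prime := ⟨hp⟩
  have hp2 : 2 < p := by
    have := hp.two_le
    rcases hpodd with ⟨k, hk⟩
    omega
  set n := 2 * l * h with hn
  have hnpos : 0 < n := by positivity
  have : NeZero n := ⟨hnpos.ne'⟩
  have hc : Fintype.card F = p ^ n := by rw [hcard, hq, ← pow_mul, hn]; congr 1; ring
  have : CharP F p := charP_of_card_eq_prime_pow hc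
  have hlh : 0 < l * h := by positivity
  let m : ZMod n := ((l * h : ℕ) : ZMod n)
  let e : ZMod n := ((d * h : ℕ) : ZMod n)
  have hφm : ∀ x : F, x ^ q ^ l = frobPow p n m x := by
    intro x
    rw [show frobPow p n m x = x ^ p ^ (l * h) from frobPow_natCast hc _ x, hq, ← pow_mul,
      mul_comm h]
  have hφe : ∀ x : F, x ^ q ^ d = frobPow p n e x := by
    intro x
    rw [show frobPow p n e x = x ^ p ^ (d * h) from frobPow_natCast hc _ x, hq, ← pow_mul,
      mul_comm h]
  have hm : m + m = 0 := by
    have : ((l * h + l * h : ℕ) : ZMod n) = 0 := by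
      rw [ZMod.natCast_eq_zero_iff]; exact ⟨1, by rw [hn]; ring⟩
    rwa [Nat.cast_add] at this
  have hdl : d * h < l * h := Nat.mul_lt_mul_of_pos_right (by omega) hh
  have hdh : 0 < d * h := by positivity
  have hnl : n = l * h + l * h := by rw [hn]; ring
  have hval : ∀ j : ℕ, j < n → ((j : ℕ) : ZMod n).val = j := fun j hj => ZMod.val_cast_of_lt hj
  have hmv : m.val = l * h := hval _ (by omega)
  have hev : e.val = d * h := hval _ (by omega)
  have hm0 : m ≠ 0 := fun h0 => by rw [h0, ZMod.val_zero] at hmv; omega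
  have he0 : e ≠ 0 := fun h0 => by rw [h0, ZMod.val_zero] at hev; omega
  have hem : e ≠ m := fun h0 => by rw [h0, hmv] at hev; omega
  have hfix : ∀ x : F, x ^ q = x → ∀ k : ℕ, x ^ q ^ k = x := by
    intro x hx k
    induction k with
    | zero => simp
    | succ k ih => rw [pow_succ, pow_mul, ih, hx]
  have ham : frobPow p n m a = a := by rw [← hφm]; exact hfix a ha l
  have hbm : frobPow p n m b = b := by rw [← hφm]; exact hfix b hb l
  have hb0 : b ≠ 0 := by
    intro h0
    exact hns a ha (by rw [h0]; ring)
  have hβ0 : β ≠ 0 := by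
    intro h0
    exact hβ 0 (by rw [h0]; ring)
  have hmm : ∀ x : F, frobPow p n m (frobPow p n m x) = x := by
    intro x; rw [frobPow_frobPow hc, hm, frobPow_zero_left]
  have hωm : frobPow p n m ω = -ω := by
    rw [← hφm]; linear_combination hωtr
  -- `u` is the coefficient sequence of `z ↦ L' z + (L' z) ^ (q ^ l)`.
  let v : ZMod n → F := fun k => bb k.val
  let α : ZMod n → F := fun k => aa k.val
  let u : ZMod n → F := fun k => α k + frobPow p n m (α (k + m))
  have hcanc : ∀ k : ZMod n, k + m + m = k := fun k => by rw [add_assoc, hm, add_zero]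
  have hu : ∀ k, frobPow p n m (u k) = u (k + m) := by
    intro k
    simp only [u, frobPow_add, hmm, hcanc]
    rw [add_comm]
  have hNv : ∀ x, N' x = ∑ k, v k * frobPow p n k x := fun x => by
    rw [hN'c, sum_range_eq_sum_frobPow]
  have hLα : ∀ x, L' x = ∑ k, α k * frobPow p n k x := fun x => by
    rw [hL'c, sum_range_eq_sum_frobPow]
  have hTr : ∀ z, ∑ k, u k * frobPow p n k z = L' z + frobPow p n m (L' z) := by
    intro z
    simp only [u, add_mul, Finset.sum_add_distrib]
    rw [hLα, frobPow_sum, ← Equiv.sum_comp (Equiv.addRight m) (fun k =>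
      frobPow p n m (α k * frobPow p n k z))]
    congr 1
    refine Finset.sum_congr rfl fun k _ => ?_
    rw [Equiv.coe_addRight, frobPow_mul, frobPow_frobPow hc, add_left_comm, hm, add_zero]
  have hmain : ∀ x y, ∑ k, u k * frobPow p n k
      (a * bhMul q l d β ω x y + b * bhMul q l d β ω (ξ * frobPow p n m x) y) =
      2 * (frobPow p n m (∑ k, v k * frobPow p n k x) * (∑ k, v k * frobPow p n k y) +
        (∑ k, v k * frobPow p n k x) * frobPow p n m (∑ k, v k * frobPow p n k y)) := by
    intro x y
    rw [hTr, hL'a, ← hφm x, hiso, ← hNv, ← hNv]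
    -- the `ω`-part of the multiplication is anti-invariant, hence disappears in the trace
    simp only [bhMul, hφm]
    generalize N' x ^ q ^ d' * N' y + N' x * N' y ^ q ^ d' = S
    simp only [frobPow_add, frobPow_mul, hmm, hωm]
    ring
  have hP : ∀ x y, bhMul q l d β ω x y = frobPow p n m x * y + x * frobPow p n m y +
      (β * (frobPow p n e x * y + x * frobPow p n e y) + frobPow p n m β *
        frobPow p n m (frobPow p n e x * y + x * frobPow p n e y)) * ω := by
    intro x y
    simp only [bhMul, hφm, hφe]
  have hids := coeff_identities hp2 hc m e hm hm0 he0 hem a b ξ β ω ham hbm _ hP u v hmain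
  have hvcast : ∀ i : ℕ, v (i : ZMod n) = bb i := by
    intro i
    change bb (i : ZMod n).val = bb i
    rw [ZMod.val_natCast]
    exact Function.Periodic.map_mod_nat (f := bb) hbbper i
  have hex : ∀ i : ℕ, bb i ≠ 0 → ∃ δ : F, δ ≠ 0 ∧ δ ^ q ^ l = δ ∧
        b * ξ ^ (q ^ l + 1) * δ ^ 2 - 2 * a * δ + b = 0 ∧
        bb (i + l * h) = bb i * ξ ^ p ^ i * δ ^ p ^ i ∧ bb (i + l * h) ≠ 0 := by
    intro i hi
    have hvm : v ((i : ZMod n) + m) = bb (i + l * h) := by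
      rw [← hvcast]; push_cast; simp only [m]; push_cast; rfl
    obtain ⟨δ, hδ0, hδm, hquad, hval⟩ := exists_delta hp2 hc m hm a b ξ hξ0 hb0 hbm u v hu
      (i : ZMod n) (hids i).1 (hids i).2 (by rwa [hvcast])
    rw [hvm, hvcast, frobPow_natCast hc, frobPow_natCast hc] at hval
    refine ⟨δ, hδ0, (hφm δ).trans hδm, ?_, hval, ?_⟩
    · rw [pow_succ, hφm]; exact hquad
    · rw [hval]
      exact mul_ne_zero (mul_ne_zero hi (pow_ne_zero _ hξ0)) (pow_ne_zero _ hδ0)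
  have hlev : Even l := by
    have hi : ∃ i, bb i ≠ 0 := by
      by_contra hcon
      push Not at hcon
      have h0 : N' 1 = N' 0 := by simp [hN'c, hcon]
      exact one_ne_zero (hN'b.1 h0)
    obtain ⟨i, hi⟩ := hi
    obtain ⟨δ, -, hδ, hquad, -⟩ := hex i hi
    have hqpos : 0 < q := by rw [hq]; positivity
    exact even_of_root hpodd hq a b _ δ ha hb
      (norm_mem_base hqpos hgd hcard β ξ hβ0 hξ) hns hδ hquad
  refine ⟨hlev, ?_, ?_, hex⟩
  · rw [Nat.odd_add] at hod; grind
  · rw [Nat.odd_add] at hod'; grind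
end

section
/- In the Section 4 setup, let (i, j) be a pair of indices with 0 ≤ i, j ≤ 2lh − 1 such that i − j taken modulo lh does not belong to the set {0, dh, (l−d)h}. If b_i ≠ 0, then b_j = 0. -/
/-!
Write `x̄ = x ^ q ^ l` and `T w = w + w̄`, and let `*_e` be the Budaghyan–Helleseth product. The
`ω`-part of `*_e` has relative trace zero, so applying `T` to the isotopism equation turns the
right-hand side into `2 (N̄'(x) N'(y) + N'(x) N̄'(y))`, and the left-hand side into a linearized
polynomial `∑ e_k w ^ p ^ k` evaluated at `w = a (x *_d y) + b ((ξ x̄) *_d y)`. The maps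
`(x, y) ↦ x ^ p ^ s * y ^ p ^ t` are distinct characters of the monoid `F × F`, so their
coefficients on the two sides may be compared (`bh_exists_coef`). Indices are taken in
`ZMod (2 l h)`, with `c = l h`, so that conjugation shifts the index by `c`.

* Every monomial of `w` has exponent difference `0` or `±d h` modulo `l h`. Hence, if `i - j` is
  none of these, the coefficients at `(i, j)` and `(i + c, j)` vanish on the right. If `b_i` and
  `b_j` were both nonzero, the two equations would force `b_i b̄_i = b_{i+c} b̄_{i+c}`.
* The coefficients at `(i, i)`, `(i + c, i + c)` and `(i + c, i)` come, on the left, only from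
  `T(ȳ (a x + b ξ x̄))`. With `λ = e_i + e_{i+c}` this yields `4 b_i b̄_{i+c} = λ (b ξ̄) ^ p ^ i`,
  `4 b_{i+c} b̄_i = λ (b ξ) ^ p ^ i` and `2 (b_i b̄_i + b_{i+c} b̄_{i+c}) = λ a ^ p ^ i`. Equal norms
  then give `λ ≠ 0` and `a² = b² ξ ξ̄`, so `a² - b² ξ ξ̄ = 0` is a square, a contradiction.

The comparison is carried out in `bh_core`.
-/

/-! ### Powers of Frobenius and coefficients -/

/-- The `k`-th power of the `p`-Frobenius, `x ↦ x ^ p ^ k`, with the exponent `k` read modulo `n`.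
On a field with `p ^ n` elements this is an action of `ZMod n`. -/
def bhFr {F : Type*} [Field F] (p : ℕ) {n : ℕ} (k : ZMod n) (x : F) : F := x ^ p ^ k.val

section Frobenius

variable {F : Type*} [Field F] {p n : ℕ}

lemma bhFr_mul (k : ZMod n) (x y : F) : bhFr p k (x * y) = bhFr p k x * bhFr p k y :=
  mul_pow _ _ _

lemma bhFr_add [Fact p.Prime] [CharP F p] (k : ZMod n) (x y : F) :
    bhFr p k (x + y) = bhFr p k x + bhFr p k y :=
  add_pow_char_pow x y p _

lemma bhFr_zero [Fact p.Prime] (k : ZMod n) : bhFr p k (0 : F) = 0 :=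
  zero_pow (pow_ne_zero _ (Fact.out : p.Prime).ne_zero)

lemma bhFr_ne_zero {k : ZMod n} {x : F} (hx : x ≠ 0) : bhFr p k x ≠ 0 :=
  pow_ne_zero _ hx

lemma bhFr_sum [Fact p.Prime] [CharP F p] {ι : Type*} (s : Finset ι) (k : ZMod n) (f : ι → F) :
    bhFr p k (∑ i ∈ s, f i) = ∑ i ∈ s, bhFr p k (f i) :=
  sum_pow_char_pow p _ s f

lemma bhFr_natCast (hx : ∀ x : F, x ^ p ^ n = x) (m : ℕ) (x : F) :
    bhFr p (m : ZMod n) x = x ^ p ^ m := by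
  have key : ∀ r : ℕ, x ^ p ^ (n * r) = x := by
    intro r
    induction r with
    | zero => simp
    | succ r ih => rw [Nat.mul_succ, pow_add, pow_mul, ih, hx]
  unfold bhFr
  rw [ZMod.val_natCast]
  conv_rhs => rw [← Nat.div_add_mod m n, pow_add, pow_mul, key]

lemma bhFr_bhFr [NeZero n] (hx : ∀ x : F, x ^ p ^ n = x) (j k : ZMod n) (x : F) :
    bhFr p j (bhFr p k x) = bhFr p (j + k) x := by
  have h := bhFr_natCast hx (j.val + k.val) x
  rw [Nat.cast_add, ZMod.natCast_zmod_val, ZMod.natCast_zmod_val] at h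
  rw [h, bhFr, bhFr, ← pow_mul, ← pow_add, add_comm]

/-- A generator of the unit group separates the powers of Frobenius. -/
lemma bhFr_injective [Fact p.Prime] [NeZero n] [Fintype F] (hcard : Fintype.card F = p ^ n)
    {j k : ZMod n} (h : ∀ x : F, bhFr p j x = bhFr p k x) : j = k := by
  have hp1 : 2 ≤ p := (Fact.out : p.Prime).two_le
  obtain ⟨g, hg⟩ := IsCyclic.exists_generator (α := Fˣ)
  have hord : orderOf g = p ^ n - 1 := by
    classical
    rw [orderOf_eq_card_of_forall_mem_zpowers hg, Nat.card_eq_fintype_card, Fintype.card_units,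
      hcard]
  by_cases hpn : p ^ n = 2
  · -- the prime field with two elements: then `n = 1` and `ZMod n` is trivial
    have hn : n = 1 := by
      by_contra hne
      have h2 : 2 ≤ n := by have := NeZero.ne n; omega
      have h4 := Nat.pow_le_pow_right (by omega : 0 < p) h2
      nlinarith
    subst hn
    exact Subsingleton.elim _ _
  have hlt : ∀ k : ZMod n, p ^ k.val < orderOf g := by
    intro k
    rw [hord]
    have h1 : k.val ≤ n - 1 := by have := ZMod.val_lt k; omega
    have h2 : p ^ k.val ≤ p ^ (n - 1) := Nat.pow_le_pow_right (by omega) h1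
    have h3 : p ^ n = p ^ (n - 1) * p := by
      rw [← pow_succ]; congr 1; have := NeZero.ne n; omega
    have h4 : 1 ≤ p ^ (n - 1) := Nat.one_le_pow _ _ (by omega)
    rcases Nat.lt_or_ge (p ^ k.val) (p ^ n - 1) with h | h
    · exact h
    · exfalso
      have h5 : p ^ n ≤ p ^ (n - 1) + 1 := by omega
      have : p ^ (n - 1) * 2 ≤ p ^ (n - 1) * p := Nat.mul_le_mul_left _ hp1
      omega
  have h1 : g ^ p ^ j.val = g ^ p ^ k.val := by
    ext
    have := h (g : F)
    simpa [bhFr] using this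
  have h2 := pow_injOn_Iio_orderOf (hlt j) (hlt k) h1
  exact ZMod.val_injective n (Nat.pow_right_injective hp1 h2)

/-- Coefficient extraction for two-variable additive polynomials: the monomials
`x ^ p ^ u * y ^ p ^ v` are distinct characters of the monoid `F × F`, hence linearly independent,
hence admit dual functionals. -/
lemma bh_exists_coef [Fact p.Prime] [NeZero n] [Fintype F] (hcard : Fintype.card F = p ^ n) :
    ∃ coef : ZMod n → ZMod n → ((F × F → F) →ₗ[F] F), ∀ s t u v : ZMod n,
      coef s t (fun z => bhFr p u z.1 * bhFr p v z.2) = if u = s ∧ v = t then 1 else 0 := by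
  classical
  have hpp := (Fact.out : p.Prime)
  let χ : ZMod n × ZMod n → (F × F →* F) := fun k =>
    { toFun := fun z => bhFr p k.1 z.1 * bhFr p k.2 z.2
      map_one' := by simp [bhFr]
      map_mul' := fun z w => by simp only [Prod.fst_mul, Prod.snd_mul, bhFr_mul]; ring }
  have hχ : Function.Injective χ := by
    rintro ⟨u, v⟩ ⟨u', v'⟩ h
    have h' : ∀ x y : F, bhFr p u x * bhFr p v y = bhFr p u' x * bhFr p v' y := fun x y =>
      DFunLike.congr_fun h (x, y)
    have hu : u = u' := bhFr_injective hcard fun x => by simpa [bhFr] using h' x 1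
    have hv : v = v' := bhFr_injective hcard fun x => by simpa [bhFr] using h' 1 x
    rw [hu, hv]
  have hli : LinearIndependent F (fun k => (χ k : F × F → F)) :=
    (linearIndependent_monoidHom (F × F) F).comp χ hχ
  let B := Module.Basis.extend hli.linearIndepOn_id
  let idx : ZMod n × ZMod n → hli.linearIndepOn_id.extend (Set.subset_univ _) := fun k =>
    ⟨χ k, hli.linearIndepOn_id.subset_extend _ ⟨k, rfl⟩⟩
  have hidx : Function.Injective idx := fun k k' h => hli.injective (congrArg Subtype.val h)
  refine ⟨fun s t => B.coord (idx (s, t)), fun s t u v => ?_⟩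
  have h1 : (fun z : F × F => bhFr p u z.1 * bhFr p v z.2) = B (idx (u, v)) := by
    rw [Module.Basis.extend_apply_self]; rfl
  rw [h1, Module.Basis.coord_apply, Module.Basis.repr_self, Finsupp.single_apply]
  simp [hidx.eq_iff]

/-- Coefficients of a linearized polynomial applied to a single monomial. -/
lemma bh_coef_lin [Fact p.Prime] [NeZero n] (hx : ∀ x : F, x ^ p ^ n = x)
    {coef : ZMod n → ZMod n → ((F × F → F) →ₗ[F] F)}
    (hcoef : ∀ s t u v : ZMod n,
      coef s t (fun z => bhFr p u z.1 * bhFr p v z.2) = if u = s ∧ v = t then 1 else 0)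
    (e : ZMod n → F) (m : F) (u v s t : ZMod n) :
    coef s t (fun z => ∑ k, e k * bhFr p k (m * (bhFr p u z.1 * bhFr p v z.2))) =
      if s - u = t - v then e (s - u) * bhFr p (s - u) m else 0 := by
  have h1 : (fun z : F × F => ∑ k, e k * bhFr p k (m * (bhFr p u z.1 * bhFr p v z.2))) =
      ∑ k, (e k * bhFr p k m) • (fun z : F × F => bhFr p (k + u) z.1 * bhFr p (k + v) z.2) := by
    funext z
    simp only [Finset.sum_apply, Pi.smul_apply, smul_eq_mul, bhFr_mul, bhFr_bhFr hx]
    exact Finset.sum_congr rfl fun k _ => by ring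
  simp only [h1, map_sum, map_smul, hcoef, smul_eq_mul]
  rw [Finset.sum_eq_single (s - u)]
  · have : (s - u + u = s ∧ s - u + v = t) ↔ s - u = t - v := by
      rw [sub_add_cancel, eq_sub_iff_add_eq]; simp
    simp only [this]
    split_ifs <;> simp
  · intro k _ hk
    rw [if_neg, mul_zero]
    rintro ⟨h, -⟩
    exact hk (eq_sub_of_add_eq h)
  · simp

/-- Coefficients of a product of two linearized polynomials in separate variables. -/
lemma bh_coef_prod [NeZero n]
    {coef : ZMod n → ZMod n → ((F × F → F) →ₗ[F] F)}
    (hcoef : ∀ s t u v : ZMod n,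
      coef s t (fun z => bhFr p u z.1 * bhFr p v z.2) = if u = s ∧ v = t then 1 else 0)
    (f g : ZMod n → F) (s t : ZMod n) :
    coef s t (fun z => (∑ k, f k * bhFr p k z.1) * ∑ k, g k * bhFr p k z.2) = f s * g t := by
  have h1 : (fun z : F × F => (∑ k, f k * bhFr p k z.1) * ∑ k, g k * bhFr p k z.2) =
      ∑ u, ∑ v, (f u * g v) • (fun z : F × F => bhFr p u z.1 * bhFr p v z.2) := by
    funext z
    simp only [Finset.sum_apply, Pi.smul_apply, smul_eq_mul, Finset.sum_mul_sum]
    exact Finset.sum_congr rfl fun u _ => Finset.sum_congr rfl fun v _ => by ring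
  simp only [h1, map_sum, map_smul, hcoef, smul_eq_mul]
  rw [Finset.sum_eq_single s, Finset.sum_eq_single t]
  · simp
  · intro v _ hv; simp [hv]
  · simp
  · intro u _ hu; simp [hu]
  · simp

lemma bh_sum_range [NeZero n] (f : ℕ → F) :
    ∑ i ∈ Finset.range n, f i = ∑ k : ZMod n, f k.val := by
  symm
  refine Finset.sum_bij (fun k _ => k.val) (fun k _ => Finset.mem_range.2 (ZMod.val_lt k))
    (fun a _ b _ h => ZMod.val_injective n h) (fun i hi => ?_) (fun _ _ => rfl)
  exact ⟨(i : ZMod n), Finset.mem_univ _, ZMod.val_cast_of_lt (Finset.mem_range.1 hi)⟩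

/-- Translating the coefficients: applying Frobenius to a linearized polynomial. -/
lemma bhFr_lin [Fact p.Prime] [CharP F p] [NeZero n] (hx : ∀ x : F, x ^ p ^ n = x)
    (f : ZMod n → F) (c : ZMod n) (x : F) :
    bhFr p c (∑ k, f k * bhFr p k x) = ∑ k, bhFr p c (f (k - c)) * bhFr p k x := by
  rw [bhFr_sum]
  simp only [bhFr_mul, bhFr_bhFr hx]
  exact Fintype.sum_equiv (Equiv.addRight c) _ _ fun k => by simp [add_comm]

end Frobenius

/-! ### Comparison of coefficients in the isotopism equation -/

section Semifield

variable {F : Type*} [Field F] {p n : ℕ}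

/-- The relative trace `w ↦ w + w ^ q ^ l` kills the `ω`-component of a Budaghyan–Helleseth
product, because `ω ^ q ^ l = -ω` while the two brackets lie in the subfield. -/
lemma bh_trace_mul [Fact p.Prime] [CharP F p] [NeZero n] (hx : ∀ x : F, x ^ p ^ n = x)
    {c : ZMod n} (hcc : c + c = 0) {ω : F} (hω : ω + bhFr p c ω = 0) (S β x y : F) :
    (bhFr p c x * y + x * bhFr p c y + (β * S + bhFr p c β * bhFr p c S) * ω) +
      bhFr p c (bhFr p c x * y + x * bhFr p c y + (β * S + bhFr p c β * bhFr p c S) * ω) =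
      2 * (bhFr p c x * y + x * bhFr p c y) := by
  have h2 : ∀ w : F, bhFr p c (bhFr p c w) = w := fun w => by
    rw [bhFr_bhFr hx, hcc]; simp [bhFr]
  have hω' : bhFr p c ω = -ω := by linear_combination hω
  simp only [bhFr_add, bhFr_mul, h2, hω']
  ring

/-- The comparison of coefficients. Write `c` for the exponent of `x ↦ x ^ q ^ l` and `D` for that
of `x ↦ x ^ q ^ d`; `ψ` forgets `c`. The traced left-hand side of the isotopism equation is
`∑ k, e k * bhFr k` applied to twelve monomials, whose exponent differences are `0` (four of them)
or `±D` modulo `c`; the traced right-hand side is twice `N̄(x) N(y) + N(x) N̄(y)`. -/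
lemma bh_core [Fact p.Prime] [NeZero n] [Fintype F] (hcard : Fintype.card F = p ^ n)
    (hx : ∀ x : F, x ^ p ^ n = x) {R : Type*} [CommRing R] (ψ : ZMod n →+* R)
    {c D : ZMod n} (hcc : c + c = 0) (hc0 : c ≠ 0) (hψc : ψ c = 0) (hψD : ψ D ≠ 0)
    (β ω ξ a b : F) (hac : bhFr p c a = a)
    (hbc : bhFr p c b = b) (hns : a ^ 2 ≠ b ^ 2 * (ξ * bhFr p c ξ))
    (e B : ZMod n → F) (h20 : (2 : F) ≠ 0)
    (hG : ∀ x y : F,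
      (∑ k, e k * bhFr p k (a * (bhFr p c x * y + x * bhFr p c y +
        (β * (bhFr p D x * y + x * bhFr p D y) +
          bhFr p c β * bhFr p c (bhFr p D x * y + x * bhFr p D y)) * ω) +
        b * (bhFr p c (ξ * bhFr p c x) * y + (ξ * bhFr p c x) * bhFr p c y +
        (β * (bhFr p D (ξ * bhFr p c x) * y + (ξ * bhFr p c x) * bhFr p D y) +
          bhFr p c β * bhFr p c
            (bhFr p D (ξ * bhFr p c x) * y + (ξ * bhFr p c x) * bhFr p D y)) * ω))) =
      2 * ((∑ k, bhFr p c (B (k - c)) * bhFr p k x) * (∑ k, B k * bhFr p k y) +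
        (∑ k, B k * bhFr p k x) * ∑ k, bhFr p c (B (k - c)) * bhFr p k y))
    [CharP F p] (i j : ZMod n) (h0 : ψ i - ψ j ≠ 0) (h1 : ψ i - ψ j ≠ ψ D)
    (h2 : ψ i - ψ j ≠ -ψ D) (hi : B i ≠ 0) : B j = 0 := by
  have hid : ∀ w : F, bhFr p (0 : ZMod n) w = w := fun w => by simp [bhFr]
  have hinv : ∀ w : F, bhFr p c (bhFr p c w) = w := fun w => by
    rw [bhFr_bhFr hx, hcc, hid]
  have hneg : -c = c := (eq_neg_of_add_eq_zero_left hcc).symm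
  obtain ⟨coef, hcoef⟩ := bh_exists_coef (p := p) (n := n) hcard
  let E : F → ZMod n → ZMod n → (F × F → F) := fun m u v z =>
    ∑ k, e k * bhFr p k (m * (bhFr p u z.1 * bhFr p v z.2))
  have hE : ∀ m u v s t, coef s t (E m u v) =
      if s - u = t - v then e (s - u) * bhFr p (s - u) m else 0 := fun m u v s t =>
    bh_coef_lin hx hcoef e m u v s t
  have hL : (E a c 0 + E a 0 c + E (b * bhFr p c ξ) 0 0 + E (b * ξ) c c) +
      (E (a * β * ω) D 0 + E (a * β * ω) 0 D + E (a * bhFr p c β * ω) (D + c) c +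
        E (a * bhFr p c β * ω) c (D + c) + E (b * β * ω * bhFr p D ξ) (D + c) 0 +
        E (b * β * ω * ξ) c D + E (b * bhFr p c β * ω * bhFr p (D + c) ξ) D c +
        E (b * bhFr p c β * ω * bhFr p c ξ) 0 (D + c)) =
      (2 : F) • ((fun z => (∑ k, bhFr p c (B (k - c)) * bhFr p k z.1) * (∑ k, B k * bhFr p k z.2)) +
        fun z => (∑ k, B k * bhFr p k z.1) * ∑ k, bhFr p c (B (k - c)) * bhFr p k z.2) := by
    funext z
    simp only [Pi.add_apply, Pi.smul_apply, smul_eq_mul]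
    rw [← hG]
    simp only [E, ← Finset.sum_add_distrib]
    refine Finset.sum_congr rfl fun k _ => ?_
    simp only [← mul_add, ← bhFr_add]
    congr 2
    have e1 : ∀ w : F, bhFr p c (bhFr p D w) = bhFr p (D + c) w := fun w => by
      rw [bhFr_bhFr hx, add_comm]
    have e2 : ∀ w : F, bhFr p c (bhFr p (D + c) w) = bhFr p D w := fun w => by
      rw [bhFr_bhFr hx, add_left_comm, hcc, add_zero]
    have e3 : ∀ w : F, bhFr p D (bhFr p c w) = bhFr p (D + c) w := fun w => by
      rw [bhFr_bhFr hx]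
    simp only [bhFr_add, bhFr_mul, hid, hinv, e1, e2, e3]
    ring
  have hC : ∀ s t, _ := fun s t => congrArg (coef s t) hL
  simp only [map_add, map_smul, smul_eq_mul, bh_coef_prod hcoef, hE] at hC
  -- a monomial contributes only at positions with the same exponent difference
  have hoff : ∀ {s t u v : ZMod n} (w : F), ψ s - ψ t ≠ ψ u - ψ v →
      (if s - u = t - v then w else 0) = 0 := by
    intro s t u v w hne
    refine if_neg fun h => hne ?_
    have := congrArg ψ h
    simp only [map_sub] at this
    linear_combination this
  -- positions whose exponent difference is not that of any monomial
  have hbad : ∀ s t : ZMod n, ψ s - ψ t ≠ 0 → ψ s - ψ t ≠ ψ D → ψ s - ψ t ≠ -ψ D →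
      bhFr p c (B (s - c)) * B t + B s * bhFr p c (B (t - c)) = 0 := by
    intro s t g0 g1 g2
    have h := hC s t
    rw [hoff, hoff, hoff, hoff, hoff, hoff, hoff, hoff, hoff, hoff, hoff, hoff] at h
    · have h' : (2 : F) * (bhFr p c (B (s - c)) * B t + B s * bhFr p c (B (t - c))) = 0 := by
        rw [← h]; ring
      exact (mul_eq_zero.1 h').resolve_left h20
    all_goals simpa [hψc]
  -- positions whose exponent difference is `0` or `c`
  have hdiag : ∀ s t : ZMod n, ψ s = ψ t →
      (if s - c = t - 0 then e (s - c) * bhFr p (s - c) a else 0) +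
      (if s - 0 = t - c then e (s - 0) * bhFr p (s - 0) a else 0) +
      (if s - 0 = t - 0 then e (s - 0) * bhFr p (s - 0) (b * bhFr p c ξ) else 0) +
      (if s - c = t - c then e (s - c) * bhFr p (s - c) (b * ξ) else 0) =
      2 * (bhFr p c (B (s - c)) * B t + B s * bhFr p c (B (t - c))) := by
    intro s t hst
    rw [← hC s t, hoff (u := D), hoff (v := D), hoff (u := D + c), hoff (v := D + c),
      hoff (u := D + c), hoff (v := D), hoff (u := D), hoff (v := D + c)]
    · ring
    all_goals simpa [hψc, hst, eq_comm] using hψD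
  have hsub : ∀ s : ZMod n, s - c - c = s := fun s => by rw [sub_sub, hcc, sub_zero]
  have hcne : ∀ s : ZMod n, s - c ≠ s := fun s h => hc0 (by simpa using h)
  have hfr : ∀ (s : ZMod n) (w : F), bhFr p (s - c) w = bhFr p s (bhFr p c w) := fun s w => by
    rw [bhFr_bhFr hx, sub_eq_add_neg, hneg]
  have hb1 := hbad i j h0 h1 h2
  have hb2 := hbad (i - c) j (by simpa [hψc] using h0) (by simpa [hψc] using h1)
    (by simpa [hψc] using h2)
  have hd1 := hdiag i i rfl
  have hd2 := hdiag (i - c) (i - c) rfl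
  have hd3 := hdiag (i - c) i (by simp [hψc])
  simp only [sub_zero, hsub, hcne, (hcne _).symm, if_true, if_false, hfr, bhFr_mul, hinv, hbc, hac,
    zero_add, add_zero] at hb1 hb2 hd1 hd2 hd3
  by_contra hj
  -- equal relative norms of `B i` and `B (i - c)` make the discriminant degenerate
  have hnorm : B i * bhFr p c (B i) = B (i - c) * bhFr p c (B (i - c)) := by
    apply mul_right_cancel₀ hj
    linear_combination B i * hb2 - B (i - c) * hb1
  have hN0 : B i * bhFr p c (B i) ≠ 0 := mul_ne_zero hi (bhFr_ne_zero hi)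
  have hlam : e i + e (i - c) ≠ 0 := by
    intro h
    have h4 : (2 : F) * 2 * (B i * bhFr p c (B i)) = 0 := by
      linear_combination (2 : F) * hnorm - hd3 + bhFr p i a * h
    exact (mul_ne_zero (mul_ne_zero h20 h20) hN0) h4
  apply hns
  have hinj : Function.Injective (bhFr p i : F → F) := by
    intro x y hxy
    have := congrArg (bhFr p (-i)) hxy
    simpa only [bhFr_bhFr hx, neg_add_cancel, hid] using this
  apply hinj
  simp only [pow_two, bhFr_mul]
  apply mul_left_cancel₀ (mul_ne_zero hlam hlam)
  have k1 : (e i + e (i - c)) * (bhFr p i b * bhFr p i (bhFr p c ξ)) =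
      4 * (B i * bhFr p c (B (i - c))) := by linear_combination hd1
  have k2 : (e i + e (i - c)) * (bhFr p i b * bhFr p i ξ) =
      4 * (B (i - c) * bhFr p c (B i)) := by linear_combination hd2
  have k3 : (e i + e (i - c)) * bhFr p i a = 4 * (B i * bhFr p c (B i)) := by
    linear_combination hd3 - 2 * hnorm
  calc _ = ((e i + e (i - c)) * bhFr p i a) * ((e i + e (i - c)) * bhFr p i a) := by ring
    _ = (4 * (B i * bhFr p c (B (i - c)))) * (4 * (B (i - c) * bhFr p c (B i))) := by
      rw [k3]; linear_combination 16 * (B i * bhFr p c (B i)) * hnorm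
    _ = _ := by rw [← k1, ← k2]; ring

end Semifield

/-- Section 4 setup: let (i, j) be a pair of indices with
0 ≤ i, j ≤ 2lh − 1 such that i − j taken modulo lh does not belong to
{0, dh, (l−d)h}. If b_i ≠ 0, then b_j = 0. -/
theorem bh_sec4_coeff_vanish (p h l d d' q : ℕ) (hp : p.Prime) (hpodd : Odd p)
    (hh : 0 < h) (hq : q = p ^ h) (hl : 2 < l)
    (hd1 : 1 ≤ d) (hd2 : d ≤ l - 1) (hgd : Nat.gcd l d = 1) (hod : Odd (l + d))
    (hd'1 : 1 ≤ d') (hd'2 : d' ≤ l - 1) (hgd' : Nat.gcd l d' = 1) (hod' : Odd (l + d'))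
    (F : Type*) [Field F] [Fintype F] (hcard : Fintype.card F = q ^ (2 * l))
    (β ω : F) (hβ : ∀ w : F, β ≠ w ^ 2) (hω : ω ≠ 0) (hωtr : ω + ω ^ q ^ l = 0)
    (ξ : F) (hξ0 : ξ ≠ 0) (hξ : ξ ^ (q ^ (l + d) - 1) = β ^ (1 - (q : ℤ) ^ l))
    (a b : F) (ha : a ^ q = a) (hb : b ^ q = b)
    (hns : ∀ w : F, w ^ q = w → a ^ 2 - b ^ 2 * ξ ^ (q ^ l + 1) ≠ w ^ 2)
    (L' N' : F → F) (hL'b : Function.Bijective L')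
    (hL'a : ∀ x y : F, L' (x + y) = L' x + L' y)
    (hN'b : Function.Bijective N') (hN'a : ∀ x y : F, N' (x + y) = N' x + N' y)
    (hiso : ∀ x y : F, L' (a * bhMul q l d β ω x y) +
        L' (b * bhMul q l d β ω (ξ * x ^ q ^ l) y) = bhMul q l d' β ω (N' x) (N' y))
    (bb aa : ℕ → F) (hbbper : ∀ i : ℕ, bb (i + 2 * l * h) = bb i)
    (haaper : ∀ i : ℕ, aa (i + 2 * l * h) = aa i)
    (hN'c : ∀ x : F, N' x = ∑ i ∈ Finset.range (2 * l * h), bb i * x ^ p ^ i)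
    (hL'c : ∀ x : F, L' x = ∑ i ∈ Finset.range (2 * l * h), aa i * x ^ p ^ i)
    (i j : ℕ) (hi : i ≤ 2 * l * h - 1) (hj : j ≤ 2 * l * h - 1)
    (hij : ((i : ZMod (l * h)) - (j : ZMod (l * h))) ∉
      ({(0 : ZMod (l * h)), ((d * h : ℕ) : ZMod (l * h)),
        (((l - d) * h : ℕ) : ZMod (l * h))} : Set (ZMod (l * h))))
    (hbi : bb i ≠ 0) :
    bb j = 0 := by
  have hlh : 0 < l * h := by positivity
  have hn0 : 0 < 2 * l * h := by positivity
  have : NeZero (2 * l * h) := ⟨hn0.ne'⟩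
  have : Fact p.Prime := ⟨hp⟩
  have hcardp : Fintype.card F = p ^ (2 * l * h) := by
    rw [hcard, hq, ← pow_mul]; congr 1; ring
  have : CharP F p := charP_of_card_eq_prime_pow hcardp
  have hx : ∀ x : F, x ^ p ^ (2 * l * h) = x := fun x => by
    rw [← hcardp]; exact FiniteField.pow_card x
  have h20 : (2 : F) ≠ 0 := by
    apply Ring.two_ne_zero
    rw [ringChar.eq F p]
    rintro rfl
    exact absurd hpodd (by decide)
  set c : ZMod (2 * l * h) := ((l * h : ℕ) : ZMod (2 * l * h)) with hc
  have hcc : c + c = 0 := by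
    rw [hc, ← Nat.cast_add, ← two_mul, ← mul_assoc, ZMod.natCast_self]
  have hc0 : c ≠ 0 := by
    rw [hc, Ne, ZMod.natCast_eq_zero_iff]
    intro hdvd
    have := Nat.le_of_dvd hlh hdvd
    nlinarith
  have hdvd : l * h ∣ 2 * l * h := ⟨2, by ring⟩
  let ψ := ZMod.castHom hdvd (ZMod (l * h))
  have hψc : ψ c = 0 := by rw [hc, map_natCast, ZMod.natCast_self]
  have hψd : ψ ((d * h : ℕ) : ZMod (2 * l * h)) = ((d * h : ℕ) : ZMod (l * h)) :=
    map_natCast ψ _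
  have hψD : ψ ((d * h : ℕ) : ZMod (2 * l * h)) ≠ 0 := by
    rw [hψd, Ne, ZMod.natCast_eq_zero_iff]
    intro hdvd
    have := Nat.le_of_dvd (by positivity) (Nat.dvd_of_mul_dvd_mul_right hh hdvd)
    omega
  have hql : ∀ x : F, x ^ q ^ l = bhFr p c x := fun x => by
    rw [hc, bhFr_natCast hx, hq, ← pow_mul, mul_comm h]
  have hqd : ∀ (m : ℕ) (x : F), x ^ q ^ m = bhFr p ((m * h : ℕ) : ZMod (2 * l * h)) x :=
    fun m x => by rw [bhFr_natCast hx, hq, ← pow_mul, mul_comm h]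
  have hfix : ∀ x : F, x ^ q = x → ∀ m : ℕ, x ^ q ^ m = x := by
    intro x hxq m
    induction m with
    | zero => simp
    | succ m ih => rw [pow_succ, pow_mul, ih, hxq]
  have hdisc : a ^ 2 ≠ b ^ 2 * (ξ * bhFr p c ξ) := by
    intro h
    refine hns 0 (zero_pow (hq ▸ pow_ne_zero _ hp.ne_zero)) ?_
    rw [pow_succ ξ, hql, h]
    ring
  let A : ZMod (2 * l * h) → F := fun k => aa k.val
  let B : ZMod (2 * l * h) → F := fun k => bb k.val
  have hN : ∀ x, N' x = ∑ k, B k * bhFr p k x := fun x => by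
    rw [hN'c, bh_sum_range]; rfl
  have hL : ∀ x, L' x = ∑ k, A k * bhFr p k x := fun x => by
    rw [hL'c, bh_sum_range]; rfl
  have hG := bh_core hcardp hx ψ hcc hc0 hψc hψD β ω ξ a b (by rw [← hql]; exact hfix a ha l)
    (by rw [← hql]; exact hfix b hb l) hdisc (fun k => A k + bhFr p c (A (k - c))) B h20 ?_
    (i : ZMod (2 * l * h)) (j : ZMod (2 * l * h))
  · have hBi : B (i : ZMod (2 * l * h)) = bb i := by
      simp only [B]; rw [ZMod.val_cast_of_lt (by omega)]
    have hBj : B (j : ZMod (2 * l * h)) = bb j := by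
      simp only [B]; rw [ZMod.val_cast_of_lt (by omega)]
    have hneg : (((l - d) * h : ℕ) : ZMod (l * h)) = -((d * h : ℕ) : ZMod (l * h)) := by
      rw [eq_neg_iff_add_eq_zero, ← Nat.cast_add, ← Nat.add_mul, Nat.sub_add_cancel (by omega),
        ZMod.natCast_self]
    rw [hneg] at hij
    simp only [Set.mem_insert_iff, Set.mem_singleton_iff, not_or] at hij
    rw [hBi, hBj, hψd, map_natCast, map_natCast] at hG
    exact hG hij.1 hij.2.1 hij.2.2 hbi
  · intro x y
    -- the relative trace of the isotopism equation
    have h1 := hiso x y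
    rw [← hL'a] at h1
    have h2 := congrArg (fun w => w + bhFr p c w) h1
    simp only [bhMul, hql, hqd d, hqd d'] at h2
    rw [bh_trace_mul hx hcc (by rw [← hql]; exact hωtr)] at h2
    rw [hL, bhFr_lin hx, ← Finset.sum_add_distrib, hN, hN, bhFr_lin hx, bhFr_lin hx] at h2
    simp only [← add_mul] at h2
    exact h2
end
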